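/- arXiv:2104.12960 — 2 statements merged into one kernel-verified Lean document; each statement's English description precedes it below -/
import Mathlib

section
/- Let (Φ₁,Φ₂) be a branching mechanism, V the unique solution of the cumulant equations (3.8), and (P_t)_{t≥0} the associated transition probabilities determined by ∫_𝕄 e^{−⟨λ,y⟩} P_t(x,dy) = exp(−⟨x,V(t,λ)⟩). Then for all λ ∈ [0,∞)², x ∈ 𝕄 and t ≥ 0: ∫_𝕄 (λ₁y₁ + λ₂y₂) P_t(x,dy) = x₁π₁(t,λ) + x₂π₂(t,λ), where t ↦ π(t,λ) = (π₁(t,λ),π₂(t,λ)) ∈ [0,∞)² is the unique solution of the linear system dπ₁/dt = −a₁₁π₁(t,λ) + π₂(t,λ)·∫_𝕄 z₂ n₁(dz), dπ₂/dt = a₂₁π₁(t,λ) + ∫_{𝕄₋₁}(z₁π₁(t,λ) + z₂π₂(t,λ)) n₂(dz), with initial condition π(0,λ) = λ. -/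
open MeasureTheory Filter Set

noncomputable section

/-- The state space `𝕄 = [0,∞) × ℕ`, as a subset of `ℝ²`. -/
def Mset : Set (ℝ × ℝ) := {z | 0 ≤ z.1 ∧ ∃ n : ℕ, z.2 = (n : ℝ)}

/-- The space `𝕄₋₁ = [0,∞) × (ℕ ∪ {-1})`, as a subset of `ℝ²`. -/
def Mm1set : Set (ℝ × ℝ) := {z | 0 ≤ z.1 ∧ ∃ n : ℤ, (-1 : ℤ) ≤ n ∧ z.2 = (n : ℝ)}

/-- The data of a branching mechanism `(Φ₁, Φ₂)` of a mixed state branching process. -/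
structure BranchingMechanism where
  a11 : ℝ
  a21 : ℝ
  alpha : ℝ
  a21_nonneg : 0 ≤ a21
  alpha_nonneg : 0 ≤ alpha
  n1 : Measure (ℝ × ℝ)
  n2 : Measure (ℝ × ℝ)
  n1_sigmaFinite : SigmaFinite n1
  n2_sigmaFinite : SigmaFinite n2
  /-- `n₁` is supported on `𝕄` -/
  n1_supp : n1 Msetᶜ = 0
  /-- `n₂` is supported on `𝕄₋₁` -/
  n2_supp : n2 Mm1setᶜ = 0
  /-- `n₁` does not charge the origin -/
  n1_zero : n1 {0} = 0
  /-- `n₂` does not charge the origin -/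
  n2_zero : n2 {0} = 0
  /-- `n₂([0,∞) × {-1}) < ∞` -/
  n2_neg1 : n2 {z : ℝ × ℝ | z.2 = -1} ≠ ⊤
  /-- `∫ (z₁ ∧ z₁² + z₂) n₁(dz) < ∞` -/
  n1_moment : ∫⁻ z, ENNReal.ofReal (min z.1 (z.1 ^ 2) + z.2) ∂n1 ≠ ⊤
  /-- `∫ (z₁ + |z₂|) n₂(dz) < ∞` -/
  n2_moment : ∫⁻ z, ENNReal.ofReal (z.1 + |z.2|) ∂n2 ≠ ⊤

/-- `Φ₁(λ) = -a₁₁λ₁ - αλ₁² - ∫ (e^{-⟨λ,z⟩} - 1 + λ₁z₁) n₁(dz)`. -/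
def mPhi1 (B : BranchingMechanism) (l : ℝ × ℝ) : ℝ :=
  -B.a11 * l.1 - B.alpha * l.1 ^ 2 -
    ∫ z, (Real.exp (-(l.1 * z.1 + l.2 * z.2)) - 1 + l.1 * z.1) ∂B.n1

/-- `Φ₂(λ) = a₂₁λ₁ + ∫ (1 - e^{-⟨λ,z⟩}) n₂(dz)`. -/
def mPhi2 (B : BranchingMechanism) (l : ℝ × ℝ) : ℝ :=
  B.a21 * l.1 + ∫ z, (1 - Real.exp (-(l.1 * z.1 + l.2 * z.2))) ∂B.n2


/-- `V : t ↦ V(t,λ)` is a continuous `[0,∞)²`-valued solution of the cumulant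
equations (3.8) with initial value `λ = l`. -/
def SolvesCumulant (B : BranchingMechanism) (l : ℝ × ℝ) (V : ℝ → ℝ × ℝ) : Prop :=
  ContinuousOn V (Ici 0) ∧
  (∀ t : ℝ, 0 ≤ t → 0 ≤ (V t).1 ∧ 0 ≤ (V t).2) ∧
  (∀ t : ℝ, 0 ≤ t →
    (V t).1 = l.1 + ∫ s in (0:ℝ)..t, mPhi1 B (V s) ∧
    (V t).2 = l.2 + ∫ s in (0:ℝ)..t, mPhi2 B (V s))

/-- `P` is the family of transition probabilities of the MSB-process with cumulant
`V`: each `P_t(x,·)` is a Borel probability measure on `𝕄` with Laplace transform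
`∫ e^{-⟨λ,y⟩} P_t(x,dy) = exp(-⟨x,V(t,λ)⟩)`. -/
def IsMSBTransition (V : ℝ → (ℝ × ℝ) → ℝ × ℝ)
    (P : ℝ → (ℝ × ℝ) → Measure (ℝ × ℝ)) : Prop :=
  ∀ t : ℝ, 0 ≤ t → ∀ x ∈ Mset,
    IsProbabilityMeasure (P t x) ∧ P t x Msetᶜ = 0 ∧
    ∀ l : ℝ × ℝ, 0 ≤ l.1 → 0 ≤ l.2 →
      ∫ y, Real.exp (-(l.1 * y.1 + l.2 * y.2)) ∂(P t x)
        = Real.exp (-(x.1 * (V t l).1 + x.2 * (V t l).2))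

/-- `π : t ↦ π(t,λ)` is a `[0,∞)²`-valued solution of the moment linear system
`dπ₁/dt = -a₁₁π₁ + π₂ ∫ z₂ n₁(dz)`,
`dπ₂/dt = a₂₁π₁ + ∫ (z₁π₁ + z₂π₂) n₂(dz)`, with `π(0,λ) = l`. -/
def SolvesMoment (B : BranchingMechanism) (l : ℝ × ℝ) (π : ℝ → ℝ × ℝ) : Prop :=
  π 0 = l ∧
  (∀ t : ℝ, 0 ≤ t → 0 ≤ (π t).1 ∧ 0 ≤ (π t).2) ∧
  (∀ t : ℝ, 0 ≤ t →
    HasDerivWithinAt (fun s => (π s).1)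
      (-B.a11 * (π t).1 + (π t).2 * ∫ z, z.2 ∂B.n1) (Ici 0) t ∧
    HasDerivWithinAt (fun s => (π s).2)
      (B.a21 * (π t).1 + ∫ z, (z.1 * (π t).1 + z.2 * (π t).2) ∂B.n2) (Ici 0) t)


open Topology

/-- the closed quadrant -/
def Qd : Set (ℝ × ℝ) := {v | 0 ≤ v.1 ∧ 0 ≤ v.2}

lemma linear_exp_deriv (A : (ℝ × ℝ) →L[ℝ] (ℝ × ℝ)) (l : ℝ × ℝ) (t : ℝ) :
    HasDerivAt (fun s : ℝ => (NormedSpace.exp (s • A)) l) (A ((NormedSpace.exp (t • A)) l)) t := by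
  have h := hasDerivAt_exp_smul_const' (𝕂 := ℝ) A t
  have h2 := h.clm_apply (hasDerivAt_const t l)
  simpa using h2

lemma linear_unique (A : (ℝ × ℝ) →L[ℝ] (ℝ × ℝ)) (f : ℝ → ℝ × ℝ) (f0 : f 0 = 0)
    (hf : ∀ t, 0 ≤ t → HasDerivWithinAt f (A (f t)) (Ici 0) t) (t : ℝ) (ht : 0 ≤ t) : f t = 0 := by
  have h := norm_le_gronwallBound_of_norm_deriv_right_le (f := f) (f' := fun t => A (f t))
    (δ := 0) (K := ‖A‖) (ε := 0) (a := 0) (b := t)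
    (fun s hs => ((hf s hs.1).continuousWithinAt).mono Icc_subset_Ici_self)
    (fun s hs => (hf s hs.1).mono (Ici_subset_Ici.2 hs.1)) (by simp [f0])
    (fun s hs => by simpa using A.le_opNorm (f s)) t ⟨ht, le_rfl⟩
  rw [gronwallBound_ε0] at h
  simpa using h

lemma V_bound (A : (ℝ × ℝ) →L[ℝ] (ℝ × ℝ)) (ρ : ℝ × ℝ → ℝ × ℝ)
    (hρ0 : ∀ v ∈ Qd, ρ v ∈ Qd) (f : ℝ → ℝ × ℝ) (hfc : ContinuousOn f (Ici 0))
    (hf0 : ∀ t, 0 ≤ t → f t ∈ Qd)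
    (hf : ∀ t, 0 ≤ t → HasDerivWithinAt f (A (f t) - ρ (f t)) (Ici t) t)
    (t : ℝ) (ht : 0 ≤ t) : ‖f t‖ ≤ ((f 0).1 + (f 0).2) * Real.exp (2 * ‖A‖ * t) := by
  have nrm : ∀ v ∈ Qd, ‖v‖ ≤ v.1 + v.2 := by
    intro v hv
    rw [Prod.norm_def, Real.norm_of_nonneg hv.1, Real.norm_of_nonneg hv.2]
    exact max_le (by linarith [hv.2]) (by linarith [hv.1])
  have h := le_gronwallBound_of_liminf_deriv_right_le (f := fun s => (f s).1 + (f s).2)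
    (f' := fun s => (A (f s) - ρ (f s)).1 + (A (f s) - ρ (f s)).2)
    (δ := (f 0).1 + (f 0).2) (K := 2 * ‖A‖) (ε := 0) (a := 0) (b := t)
    ?_ ?_ le_rfl ?_ t ⟨ht, le_rfl⟩
  · rw [gronwallBound_ε0] at h
    refine (nrm _ (hf0 t ht)).trans ?_
    simpa using h
  · have := hfc.mono (Icc_subset_Ici_self : Icc 0 t ⊆ Ici 0)
    fun_prop
  · intro s hs r hr
    have h1 := (hf s hs.1).hasFDerivWithinAt
    have h2 : HasDerivWithinAt (fun s => (f s).1) (A (f s) - ρ (f s)).1 (Ici s) s := by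
      simpa using (h1.fst).hasDerivWithinAt
    have h3 : HasDerivWithinAt (fun s => (f s).2) (A (f s) - ρ (f s)).2 (Ici s) s := by
      simpa using (h1.snd).hasDerivWithinAt
    have := (h2.add h3).liminf_right_slope_le hr
    simpa [slope, Pi.add_apply] using this
  · intro s hs
    have q := hf0 s hs.1
    have q2 := hρ0 _ q
    have q3 := nrm _ q
    have q4 := A.le_opNorm (f s)
    have q5 := (norm_fst_le (A (f s))).trans q4
    have q6 := (norm_snd_le (A (f s))).trans q4
    have q7 := (Real.le_norm_self _).trans q5
    have q8 := (Real.le_norm_self _).trans q6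
    have q9 := mul_le_mul_of_nonneg_left q3 (norm_nonneg A)
    have := q2.1
    have := q2.2
    simp only [Prod.fst_sub, Prod.snd_sub]
    linarith

lemma ode_lim (A : (ℝ × ℝ) →L[ℝ] (ℝ × ℝ)) (ρ : ℝ × ℝ → ℝ × ℝ)
    (hρ0 : ∀ v ∈ Qd, ρ v ∈ Qd)
    (hρo : ∀ ε > 0, ∃ δ > 0, ∀ v ∈ Qd, ‖v‖ ≤ δ → ‖ρ v‖ ≤ ε * ‖v‖)
    (V : ℝ → ℝ × ℝ → ℝ × ℝ)
    (hVc : ∀ l ∈ Qd, ContinuousOn (fun t => V t l) (Ici 0))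
    (hVq : ∀ l ∈ Qd, ∀ t, 0 ≤ t → V t l ∈ Qd)
    (hV0 : ∀ l ∈ Qd, V 0 l = l)
    (hVd : ∀ l ∈ Qd, ∀ t, 0 ≤ t →
      HasDerivWithinAt (fun t => V t l) (A (V t l) - ρ (V t l)) (Ici t) t)
    (l : ℝ × ℝ) (hl : l ∈ Qd) (t : ℝ) (ht : 0 ≤ t) :
    Tendsto (fun θ : ℝ => θ⁻¹ • V t (θ • l)) (𝓝[>] 0) (𝓝 (NormedSpace.exp (t • A) l)) := by
  rw [Metric.tendsto_nhds]
  intro η hη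
  set C := (l.1 + l.2) * Real.exp (2 * ‖A‖ * t) with hC
  have hC0 : 0 ≤ C := mul_nonneg (add_nonneg hl.1 hl.2) (Real.exp_pos _).le
  set K := ‖A‖ + 1 with hK
  have hK0 : 0 < K := by positivity
  set G := Real.exp (K * t) with hG
  have hG1 : 1 ≤ G := Real.one_le_exp (by positivity)
  obtain ⟨δ, hδ, hρδ⟩ := hρo (η / ((C + 1) * G / K)) (by positivity)
  have ev : ∀ᶠ θ : ℝ in 𝓝[>] 0, 0 < θ ∧ θ * C < δ := by
    refine (eventually_mem_nhdsWithin).and ?_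
    have : Tendsto (fun θ : ℝ => θ * C) (𝓝[>] 0) (𝓝 (0 * C)) :=
      ((continuous_id.mul continuous_const).tendsto 0).mono_left nhdsWithin_le_nhds
    rw [zero_mul] at this
    exact this.eventually (gt_mem_nhds hδ)
  filter_upwards [ev] with θ ⟨hθ, hθδ⟩
  have hθl : θ • l ∈ Qd := ⟨mul_nonneg hθ.le hl.1, mul_nonneg hθ.le hl.2⟩
  have hb : ∀ s, 0 ≤ s → s ≤ t → ‖V s (θ • l)‖ ≤ θ * C := by
    intro s hs hst
    have := V_bound A ρ hρ0 (fun t => V t (θ • l)) (hVc _ hθl) (hVq _ hθl) (hVd _ hθl) s hs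
    refine this.trans ?_
    simp only [hV0 _ hθl, Prod.smul_fst, Prod.smul_snd, smul_eq_mul]
    rw [← mul_add, mul_assoc]
    refine mul_le_mul_of_nonneg_left ?_ hθ.le
    refine mul_le_mul_of_nonneg_left ?_ (add_nonneg hl.1 hl.2)
    gcongr
  set ε := η / ((C + 1) * G / K) with hε
  have hε0 : 0 < ε := by positivity
  have key := norm_le_gronwallBound_of_norm_deriv_right_le
    (f := fun s => V s (θ • l) - θ • NormedSpace.exp (s • A) l)
    (f' := fun s => (A (V s (θ • l)) - ρ (V s (θ • l))) - θ • A (NormedSpace.exp (s • A) l))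
    (δ := 0) (K := K) (ε := ε * (θ * C)) (a := 0) (b := t) ?_ ?_ ?_ ?_ t ⟨ht, le_rfl⟩
  · rw [gronwallBound_of_K_ne_0 hK0.ne'] at key
    rw [dist_eq_norm]
    have e1 : θ⁻¹ • V t (θ • l) - NormedSpace.exp (t • A) l
        = θ⁻¹ • (V t (θ • l) - θ • NormedSpace.exp (t • A) l) := by
      rw [smul_sub, inv_smul_smul₀ hθ.ne']
    rw [e1, norm_smul, norm_inv, Real.norm_of_nonneg hθ.le, inv_mul_lt_iff₀ hθ]
    refine key.trans_lt ?_
    simp only [zero_mul, zero_add, sub_zero]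
    have e2 : ε * (C + 1) * G / K = η := by
      rw [hε]; field_simp
    calc ε * (θ * C) / K * (G - 1) ≤ ε * (θ * C) / K * G := by
          gcongr; linarith
      _ < ε * (θ * (C + 1)) / K * G := by
          gcongr; linarith
      _ = θ * (ε * (C + 1) * G / K) := by ring
      _ = θ * η := by rw [e2]
  · refine ((hVc _ hθl).mono Icc_subset_Ici_self).sub (ContinuousOn.const_smul ?_ θ)
    exact fun s _ => (linear_exp_deriv A l s).continuousAt.continuousWithinAt
  · intro s hs
    exact (hVd _ hθl s hs.1).sub ((linear_exp_deriv A l s).hasDerivWithinAt.const_smul θ)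
  · simp [hV0 _ hθl]
  · intro s hs
    have b := hb s hs.1 hs.2.le
    have r := hρδ _ (hVq _ hθl s hs.1) (b.trans hθδ.le)
    have e : (A (V s (θ • l)) - ρ (V s (θ • l))) - θ • A (NormedSpace.exp (s • A) l)
        = A (V s (θ • l) - θ • NormedSpace.exp (s • A) l) - ρ (V s (θ • l)) := by
      rw [map_sub, map_smul]; abel
    rw [e]
    refine (norm_sub_le _ _).trans (add_le_add ?_ ?_)
    · refine (A.le_opNorm _).trans ?_
      gcongr; linarith
    · exact r.trans (by gcongr)


/-- `g(x) = e^{-x} - 1 + x` -/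
def gfun (x : ℝ) : ℝ := Real.exp (-x) - 1 + x

lemma gfun_nonneg (x : ℝ) : 0 ≤ gfun x := by
  have := Real.add_one_le_exp (-x)
  unfold gfun; linarith

lemma gfun_cont : Continuous gfun := by unfold gfun; fun_prop

lemma gfun_le (x : ℝ) (hx : -1 ≤ x) : gfun x ≤ min |x| (x ^ 2) := by
  rcases le_total x 1 with h | h
  · have ha : |x| ≤ 1 := abs_le.2 ⟨hx, h⟩
    have := Real.abs_exp_sub_one_sub_id_le (x := -x) (by rwa [abs_neg])
    have h2 := (le_abs_self _).trans this
    have h3 : x ^ 2 ≤ |x| := by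
      rw [← sq_abs]; nlinarith [abs_nonneg x]
    unfold gfun
    refine le_min ?_ ?_ <;> nlinarith
  · have : Real.exp (-x) ≤ 1 := Real.exp_le_one_iff.2 (by linarith)
    unfold gfun
    rw [abs_of_nonneg (by linarith)]
    refine le_min ?_ ?_ <;> nlinarith

lemma gfun_le' (C x : ℝ) (hC : 0 ≤ C) (hx : -C ≤ x) :
    gfun x ≤ Real.exp C * min |x| (x ^ 2) := by
  have hm : 0 ≤ min |x| (x ^ 2) := le_min (abs_nonneg _) (sq_nonneg _)
  rcases le_total (-1) x with h | h
  · refine (gfun_le x h).trans ?_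
    exact le_mul_of_one_le_left hm (Real.one_le_exp hC)
  · have h1 : Real.exp (-x) ≤ Real.exp C := Real.exp_le_exp.2 (by linarith)
    have h2 : 1 ≤ min |x| (x ^ 2) := by
      refine le_min ?_ (by nlinarith)
      rw [abs_of_nonpos (by linarith)]; linarith
    have := Real.exp_pos C
    unfold gfun
    nlinarith

/-- integrability class used for both jump measures -/
structure Good (μ : Measure (ℝ × ℝ)) : Prop where
  pos : ∀ᵐ z ∂μ, 0 ≤ z.1 ∧ -1 ≤ z.2
  int : Integrable (fun z : ℝ × ℝ => min (z.1 + |z.2|) ((z.1 + |z.2|) ^ 2)) μ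

/-- remainder -/
def Rem (μ : Measure (ℝ × ℝ)) (v : ℝ × ℝ) : ℝ := ∫ z, gfun (v.1 * z.1 + v.2 * z.2) ∂μ

lemma Rem_nonneg (μ : Measure (ℝ × ℝ)) (v : ℝ × ℝ) : 0 ≤ Rem μ v :=
  integral_nonneg (fun _ => gfun_nonneg _)

lemma inner_bd (v z : ℝ × ℝ) (r : ℝ) (hv : v ∈ Qd) (hr : ‖v‖ ≤ r) (hz : 0 ≤ z.1 ∧ -1 ≤ z.2) :
    |v.1 * z.1 + v.2 * z.2| ≤ r * (z.1 + |z.2|) ∧ -r ≤ v.1 * z.1 + v.2 * z.2 := by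
  have h1 : v.1 ≤ r := (Real.le_norm_self _).trans ((norm_fst_le v).trans hr)
  have h2 : v.2 ≤ r := (Real.le_norm_self _).trans ((norm_snd_le v).trans hr)
  have := hv.1
  have := hv.2
  constructor
  · refine (abs_add_le _ _).trans ?_
    rw [abs_mul, abs_mul, abs_of_nonneg hv.1, abs_of_nonneg hv.2, abs_of_nonneg hz.1, mul_add]
    gcongr
    exact hz.1
  · nlinarith [mul_nonneg hv.1 hz.1]

lemma dom_bd (v z : ℝ × ℝ) (r : ℝ) (hr1 : 1 ≤ r) (hv : v ∈ Qd) (hr : ‖v‖ ≤ r)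
    (hz : 0 ≤ z.1 ∧ -1 ≤ z.2) :
    ‖gfun (v.1 * z.1 + v.2 * z.2)‖ ≤
      Real.exp r * r ^ 2 * min (z.1 + |z.2|) ((z.1 + |z.2|) ^ 2) := by
  obtain ⟨h1, h2⟩ := inner_bd v z r hv hr hz
  rw [Real.norm_of_nonneg (gfun_nonneg _)]
  refine (gfun_le' r _ (by linarith) h2).trans ?_
  rw [mul_assoc]
  refine mul_le_mul_of_nonneg_left ?_ (Real.exp_pos r).le
  have hs : 0 ≤ z.1 + |z.2| := add_nonneg hz.1 (abs_nonneg _)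
  rw [mul_min_of_nonneg _ _ (sq_nonneg r)]
  refine le_min ?_ ?_
  · refine (min_le_left _ _).trans (h1.trans ?_)
    gcongr; nlinarith
  · refine (min_le_right _ _).trans ?_
    rw [← sq_abs, ← mul_pow]
    gcongr

lemma Good.integrable {μ : Measure (ℝ × ℝ)} (h : Good μ) (v : ℝ × ℝ) (hv : v ∈ Qd) :
    Integrable (fun z : ℝ × ℝ => gfun (v.1 * z.1 + v.2 * z.2)) μ := by
  refine (h.int.const_mul (Real.exp (‖v‖ + 1) * (‖v‖ + 1) ^ 2)).mono' ?_ ?_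
  · exact (gfun_cont.comp (by fun_prop)).aestronglyMeasurable
  · filter_upwards [h.pos] with z hz
    exact dom_bd v z _ (by linarith [norm_nonneg v]) hv (by linarith) hz

lemma Good.cont {μ : Measure (ℝ × ℝ)} (h : Good μ) : ContinuousOn (Rem μ) Qd := by
  intro v hv
  refine MeasureTheory.continuousWithinAt_of_dominated
    (bound := fun z => Real.exp (‖v‖ + 1) * (‖v‖ + 1) ^ 2 *
      min (z.1 + |z.2|) ((z.1 + |z.2|) ^ 2)) ?_ ?_ (h.int.const_mul _) ?_
  · exact Eventually.of_forall fun w => (gfun_cont.comp (by fun_prop)).aestronglyMeasurable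
  · have : ∀ᶠ w in 𝓝[Qd] v, ‖w‖ < ‖v‖ + 1 :=
      (continuous_norm.tendsto v).mono_left nhdsWithin_le_nhds |>.eventually
        (gt_mem_nhds (by linarith))
    filter_upwards [this, eventually_mem_nhdsWithin] with w hw hwq
    filter_upwards [h.pos] with z hz
    exact dom_bd w z _ (by linarith [norm_nonneg v]) hwq hw.le hz
  · refine Eventually.of_forall fun z => Continuous.continuousWithinAt ?_
    exact gfun_cont.comp (by fun_prop)

lemma Good.small {μ : Measure (ℝ × ℝ)} (h : Good μ) (ε : ℝ) (hε : 0 < ε) :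
    ∃ δ > 0, ∀ v ∈ Qd, ‖v‖ ≤ δ → Rem μ v ≤ ε * ‖v‖ := by
  have lim : Tendsto (fun r : ℝ => ∫ z : ℝ × ℝ, min (z.1 + |z.2|) (r * (z.1 + |z.2|) ^ 2) ∂μ)
      (𝓝[≥] 0) (𝓝 (∫ z : ℝ × ℝ, 0 ∂μ)) := by
    refine MeasureTheory.tendsto_integral_filter_of_dominated_convergence _ ?_ ?_ h.int ?_
    · exact Eventually.of_forall fun r => (by fun_prop : Continuous _).aestronglyMeasurable
    · have : ∀ᶠ r : ℝ in 𝓝[≥] 0, r < 1 :=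
        (tendsto_id.mono_left nhdsWithin_le_nhds).eventually (gt_mem_nhds one_pos)
      filter_upwards [this, eventually_mem_nhdsWithin] with r hr hr0
      have hr0 : 0 ≤ r := hr0
      filter_upwards [h.pos] with z hz
      have hs : 0 ≤ z.1 + |z.2| := add_nonneg hz.1 (abs_nonneg _)
      rw [Real.norm_of_nonneg (le_min hs (by positivity))]
      refine min_le_min le_rfl ?_
      exact mul_le_of_le_one_left (sq_nonneg _) hr.le
    · filter_upwards [h.pos] with z hz
      have hs : 0 ≤ z.1 + |z.2| := add_nonneg hz.1 (abs_nonneg _)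
      have : Tendsto (fun r : ℝ => min (z.1 + |z.2|) (r * (z.1 + |z.2|) ^ 2)) (𝓝[≥] 0)
          (𝓝 (min (z.1 + |z.2|) (0 * (z.1 + |z.2|) ^ 2))) :=
        ((by fun_prop : Continuous fun r : ℝ =>
          min (z.1 + |z.2|) (r * (z.1 + |z.2|) ^ 2)).tendsto 0).mono_left nhdsWithin_le_nhds
      simpa [hs] using this
  rw [integral_zero] at lim
  have ev := lim.eventually (gt_mem_nhds hε)
  obtain ⟨d, hd, hd2⟩ := mem_nhdsGE_iff_exists_Icc_subset.1 ev
  have hd : 0 < d := hd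
  refine ⟨min d 1, lt_min hd one_pos, fun v hv hvd => ?_⟩
  have h1 : ‖v‖ ≤ 1 := hvd.trans (min_le_right _ _)
  have h2 := hd2 (show ‖v‖ ∈ Icc 0 d from ⟨norm_nonneg v, hvd.trans (min_le_left _ _)⟩)
  have h2 : ∫ z : ℝ × ℝ, min (z.1 + |z.2|) (‖v‖ * (z.1 + |z.2|) ^ 2) ∂μ < ε := h2
  rw [mul_comm]
  refine le_trans ?_ (mul_le_mul_of_nonneg_left h2.le (norm_nonneg v))
  rw [← integral_const_mul]
  refine integral_mono_ae (h.integrable v hv) ?_ ?_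
  · refine Integrable.const_mul ?_ _
    refine h.int.mono' (by fun_prop : Continuous _).aestronglyMeasurable ?_
    filter_upwards [h.pos] with z hz
    have hs : 0 ≤ z.1 + |z.2| := add_nonneg hz.1 (abs_nonneg _)
    rw [Real.norm_of_nonneg (le_min hs (by positivity))]
    exact min_le_min le_rfl (mul_le_of_le_one_left (sq_nonneg _) h1)
  · filter_upwards [h.pos] with z hz
    have hs : 0 ≤ z.1 + |z.2| := add_nonneg hz.1 (abs_nonneg _)
    obtain ⟨i1, i2⟩ := inner_bd v z _ hv le_rfl hz
    refine (gfun_le _ (by linarith)).trans ?_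
    rw [mul_min_of_nonneg _ _ (norm_nonneg v)]
    refine min_le_min i1 ?_
    rw [← sq_abs]
    calc _ ≤ (‖v‖ * (z.1 + |z.2|)) ^ 2 := by gcongr
      _ = _ := by ring

lemma n1_ae (B : BranchingMechanism) : ∀ᵐ z ∂B.n1, z ∈ Mset := B.n1_supp
lemma n2_ae (B : BranchingMechanism) : ∀ᵐ z ∂B.n2, z ∈ Mm1set := B.n2_supp

lemma n1_int (B : BranchingMechanism) :
    Integrable (fun z : ℝ × ℝ => min z.1 (z.1 ^ 2) + z.2) B.n1 := by
  refine ⟨(by fun_prop : Continuous _).aestronglyMeasurable, ?_⟩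
  rw [hasFiniteIntegral_iff_ofReal]
  · exact lt_top_iff_ne_top.2 B.n1_moment
  · filter_upwards [n1_ae B] with z hz
    obtain ⟨h, n, hn⟩ := hz
    have : (0 : ℝ) ≤ n := n.cast_nonneg
    exact add_nonneg (le_min h (sq_nonneg _)) (hn ▸ this)

lemma n1_int2 (B : BranchingMechanism) : Integrable (fun z : ℝ × ℝ => z.2) B.n1 := by
  refine (n1_int B).mono' (by fun_prop : Continuous _).aestronglyMeasurable ?_
  filter_upwards [n1_ae B] with z hz
  obtain ⟨h, n, hn⟩ := hz
  have : (0 : ℝ) ≤ n := n.cast_nonneg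
  have h2 : 0 ≤ min z.1 (z.1 ^ 2) := le_min h (sq_nonneg _)
  rw [Real.norm_of_nonneg (hn ▸ this)]
  linarith

lemma n2_int (B : BranchingMechanism) : Integrable (fun z : ℝ × ℝ => z.1 + |z.2|) B.n2 := by
  refine ⟨(by fun_prop : Continuous _).aestronglyMeasurable, ?_⟩
  rw [hasFiniteIntegral_iff_ofReal]
  · exact lt_top_iff_ne_top.2 B.n2_moment
  · filter_upwards [n2_ae B] with z hz
    exact add_nonneg hz.1 (abs_nonneg _)

lemma n2_int1 (B : BranchingMechanism) : Integrable (fun z : ℝ × ℝ => z.1) B.n2 := by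
  refine (n2_int B).mono' (by fun_prop : Continuous _).aestronglyMeasurable ?_
  filter_upwards [n2_ae B] with z hz
  rw [Real.norm_of_nonneg hz.1]
  linarith [abs_nonneg z.2]

lemma n2_int2 (B : BranchingMechanism) : Integrable (fun z : ℝ × ℝ => z.2) B.n2 := by
  refine (n2_int B).mono' (by fun_prop : Continuous _).aestronglyMeasurable ?_
  filter_upwards [n2_ae B] with z hz
  rw [Real.norm_eq_abs]
  linarith [hz.1]

lemma n1_good (B : BranchingMechanism) : Good B.n1 := by
  constructor
  · filter_upwards [n1_ae B] with z hz
    obtain ⟨h, n, hn⟩ := hz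
    have : (0 : ℝ) ≤ n := n.cast_nonneg
    exact ⟨h, by linarith⟩
  · refine ((n1_int B).const_mul 2).mono' (by fun_prop : Continuous _).aestronglyMeasurable ?_
    filter_upwards [n1_ae B] with z hz
    obtain ⟨h, n, hn⟩ := hz
    have hn0 : (0 : ℝ) ≤ n := n.cast_nonneg
    rw [hn, abs_of_nonneg hn0, Real.norm_of_nonneg (le_min (by positivity) (by positivity))]
    rcases Nat.eq_zero_or_pos n with h0 | h0
    · subst h0
      simp only [Nat.cast_zero, add_zero]
      linarith [le_min h (sq_nonneg z.1)]
    · have h1 : (1 : ℝ) ≤ n := by exact_mod_cast h0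
      refine (min_le_left _ _).trans ?_
      rcases min_cases z.1 (z.1 ^ 2) with ⟨h3, h4⟩ | ⟨h3, h4⟩ <;> rw [h3] <;> nlinarith [sq_nonneg (z.1 - 1)]

lemma n2_good (B : BranchingMechanism) : Good B.n2 := by
  constructor
  · filter_upwards [n2_ae B] with z hz
    obtain ⟨h, n, hn1, hn⟩ := hz
    refine ⟨h, ?_⟩
    rw [hn]; exact_mod_cast hn1
  · refine (n2_int B).mono' (by fun_prop : Continuous _).aestronglyMeasurable ?_
    filter_upwards [n2_ae B] with z hz
    have hs : 0 ≤ z.1 + |z.2| := add_nonneg hz.1 (abs_nonneg _)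
    rw [Real.norm_of_nonneg (le_min hs (sq_nonneg _))]
    exact min_le_left _ _

/-- the linear part -/
def Alin (B : BranchingMechanism) : (ℝ × ℝ) →L[ℝ] (ℝ × ℝ) :=
  ((-B.a11) • ContinuousLinearMap.fst ℝ ℝ ℝ +
    (∫ z, z.2 ∂B.n1) • ContinuousLinearMap.snd ℝ ℝ ℝ).prod
  ((B.a21 + ∫ z, z.1 ∂B.n2) • ContinuousLinearMap.fst ℝ ℝ ℝ +
    (∫ z, z.2 ∂B.n2) • ContinuousLinearMap.snd ℝ ℝ ℝ)

/-- the nonlinear part -/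
def rhoB (B : BranchingMechanism) (v : ℝ × ℝ) : ℝ × ℝ :=
  (B.alpha * v.1 ^ 2 + Rem B.n1 v, Rem B.n2 v)

lemma Alin_fst (B : BranchingMechanism) (v : ℝ × ℝ) :
    (Alin B v).1 = -B.a11 * v.1 + v.2 * ∫ z, z.2 ∂B.n1 := by
  simp [Alin]; ring

lemma Alin_snd (B : BranchingMechanism) (v : ℝ × ℝ) :
    (Alin B v).2 = B.a21 * v.1 + ∫ z, (z.1 * v.1 + z.2 * v.2) ∂B.n2 := by
  rw [integral_add ((n2_int1 B).mul_const _) ((n2_int2 B).mul_const _),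
    integral_mul_const, integral_mul_const]
  simp [Alin]; ring

lemma Phi1_eq (B : BranchingMechanism) (v : ℝ × ℝ) (hv : v ∈ Qd) :
    mPhi1 B v = (Alin B v - rhoB B v).1 := by
  have e : ∫ z, (Real.exp (-(v.1 * z.1 + v.2 * z.2)) - 1 + v.1 * z.1) ∂B.n1
      = Rem B.n1 v - v.2 * ∫ z, z.2 ∂B.n1 := by
    unfold Rem
    rw [← integral_const_mul, ← integral_sub ((n1_good B).integrable v hv)
      ((n1_int2 B).const_mul _)]
    congr 1; ext z; unfold gfun; ring
  rw [Prod.fst_sub, Alin_fst, mPhi1, e, rhoB]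
  simp only
  ring

lemma Phi2_eq (B : BranchingMechanism) (v : ℝ × ℝ) (hv : v ∈ Qd) :
    mPhi2 B v = (Alin B v - rhoB B v).2 := by
  have e : ∫ z, (1 - Real.exp (-(v.1 * z.1 + v.2 * z.2))) ∂B.n2
      = (∫ z, (z.1 * v.1 + z.2 * v.2) ∂B.n2) - Rem B.n2 v := by
    unfold Rem
    have i : Integrable (fun z : ℝ × ℝ => z.1 * v.1 + z.2 * v.2) B.n2 :=
      ((n2_int1 B).mul_const _).add ((n2_int2 B).mul_const _)
    rw [← integral_sub i ((n2_good B).integrable v hv)]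
    congr 1; ext z; unfold gfun; ring
  rw [Prod.snd_sub, Alin_snd, mPhi2, e, rhoB]
  simp only
  ring

lemma rhoB_nonneg (B : BranchingMechanism) (v : ℝ × ℝ) (_hv : v ∈ Qd) : rhoB B v ∈ Qd :=
  ⟨add_nonneg (mul_nonneg B.alpha_nonneg (sq_nonneg _)) (Rem_nonneg _ _), Rem_nonneg _ _⟩

lemma rhoB_cont (B : BranchingMechanism) : ContinuousOn (rhoB B) Qd := by
  refine ContinuousOn.prodMk (ContinuousOn.add ?_ (n1_good B).cont) (n2_good B).cont
  fun_prop

lemma rhoB_small (B : BranchingMechanism) :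
    ∀ ε > 0, ∃ δ > 0, ∀ v ∈ Qd, ‖v‖ ≤ δ → ‖rhoB B v‖ ≤ ε * ‖v‖ := by
  intro ε hε
  obtain ⟨d1, hd1, h1⟩ := (n1_good B).small (ε / 2) (by positivity)
  obtain ⟨d2, hd2, h2⟩ := (n2_good B).small ε hε
  have ha := B.alpha_nonneg
  refine ⟨min (ε / 2 / (B.alpha + 1)) (min d1 d2), by positivity, fun v hv hvd => ?_⟩
  have q1 := h1 v hv (hvd.trans ((min_le_right _ _).trans (min_le_left _ _)))
  have q2 := h2 v hv (hvd.trans ((min_le_right _ _).trans (min_le_right _ _)))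
  have q3 := hvd.trans (min_le_left _ _)
  rw [le_div_iff₀ (by positivity)] at q3
  have hq := rhoB_nonneg B v hv
  have v1 : v.1 ≤ ‖v‖ := (Real.le_norm_self _).trans (norm_fst_le v)
  have v10 := hv.1
  have v2 : v.1 ^ 2 ≤ ‖v‖ * ‖v‖ := by nlinarith
  have nn := norm_nonneg v
  rw [Prod.norm_def, Real.norm_of_nonneg hq.1, Real.norm_of_nonneg hq.2]
  refine max_le ?_ q2
  have : B.alpha * v.1 ^ 2 ≤ ε / 2 * ‖v‖ := by
    calc B.alpha * v.1 ^ 2 ≤ B.alpha * (‖v‖ * ‖v‖) := by gcongr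
      _ ≤ (‖v‖ * (B.alpha + 1)) * ‖v‖ := by nlinarith [mul_nonneg nn nn]
      _ ≤ _ := by gcongr
  simp only [rhoB]
  linarith

lemma cumulant_deriv (B : BranchingMechanism) (l : ℝ × ℝ) (V : ℝ → ℝ × ℝ)
    (h : SolvesCumulant B l V) : V 0 = l ∧ ∀ t, 0 ≤ t →
      HasDerivWithinAt V (Alin B (V t) - rhoB B (V t)) (Ici t) t := by
  obtain ⟨hc, hq, he⟩ := h
  constructor
  · have := he 0 le_rfl
    simp only [intervalIntegral.integral_same, add_zero] at this
    exact Prod.ext this.1 this.2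
  intro t ht
  let W : ℝ → ℝ × ℝ := fun s => V (max s 0)
  have hWq : ∀ s, W s ∈ Qd := fun s => hq _ (le_max_right _ _)
  have hWc : Continuous W := hc.comp_continuous (by fun_prop)
    (fun s => mem_Ici.2 (le_max_right _ _))
  have hF : Continuous fun s => Alin B (W s) - rhoB B (W s) :=
    ((Alin B).continuous.comp hWc).sub ((rhoB_cont B).comp_continuous hWc hWq)
  have hWV : ∀ s, 0 ≤ s → W s = V s := fun s hs => by simp [W, max_eq_left hs]
  have d1 := ((hF.fst).integral_hasStrictDerivAt 0 t).hasDerivAt.const_add l.1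
  have d2 := ((hF.snd).integral_hasStrictDerivAt 0 t).hasDerivAt.const_add l.2
  have d := (d1.prodMk d2).hasDerivWithinAt (s := Ici t)
  have eqv : ∀ s, 0 ≤ s → V s = (l.1 + ∫ u in (0:ℝ)..s, (Alin B (W u) - rhoB B (W u)).1,
      l.2 + ∫ u in (0:ℝ)..s, (Alin B (W u) - rhoB B (W u)).2) := by
    intro s hs
    have := he s hs
    refine Prod.ext (this.1.trans ?_) (this.2.trans ?_)
    · simp only
      congr 1
      refine intervalIntegral.integral_congr fun u hu => ?_
      rw [uIcc_of_le hs] at hu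
      rw [hWV u hu.1, Phi1_eq B _ (hq u hu.1)]
    · simp only
      congr 1
      refine intervalIntegral.integral_congr fun u hu => ?_
      rw [uIcc_of_le hs] at hu
      rw [hWV u hu.1, Phi2_eq B _ (hq u hu.1)]
  have d' := d.congr (fun s hs => eqv s (ht.trans hs)) (eqv t ht)
  rw [hWV t ht] at d'
  exact d'

lemma moment_of_laplace (μ : Measure (ℝ × ℝ)) [IsProbabilityMeasure μ] (X : ℝ × ℝ → ℝ)
    (hX : Continuous X) (hX0 : ∀ᵐ y ∂μ, 0 ≤ X y) (w : ℝ → ℝ) (m : ℝ)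
    (hw : ∀ θ, 0 < θ → ∫ y, Real.exp (-(θ * X y)) ∂μ = Real.exp (-(θ * w θ)))
    (hm : Tendsto w (𝓝[>] 0) (𝓝 m)) : ∫ y, X y ∂μ = m := by
  -- the difference quotient of `1 - e^{-x}`
  have dq : Tendsto (fun x : ℝ => Real.exp (-x)) (𝓝 0) (𝓝 1) := by
    have : Continuous fun x : ℝ => Real.exp (-x) := by fun_prop
    simpa using this.tendsto 0
  have quot : ∀ (u : ℝ → ℝ) (c : ℝ), Tendsto u (𝓝[>] 0) (𝓝 c) →
      Tendsto (fun θ : ℝ => (1 - Real.exp (-(θ * u θ))) / θ) (𝓝[>] 0) (𝓝 c) := by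
    intro u c hu
    have hθ : Tendsto (fun θ : ℝ => θ) (𝓝[>] 0) (𝓝 0) := tendsto_id.mono_left nhdsWithin_le_nhds
    have hg : Tendsto (fun θ : ℝ => θ * u θ ^ 2) (𝓝[>] 0) (𝓝 0) := by
      simpa using hθ.mul (hu.pow 2)
    have hsm : Tendsto (fun θ : ℝ => θ * u θ) (𝓝[>] 0) (𝓝 0) := by
      simpa using hθ.mul hu
    have ev : ∀ᶠ θ : ℝ in 𝓝[>] 0, -1 < θ * u θ := hsm.eventually (lt_mem_nhds (by norm_num))
    have hz : Tendsto (fun θ : ℝ => gfun (θ * u θ) / θ) (𝓝[>] 0) (𝓝 0) := by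
      refine tendsto_of_tendsto_of_tendsto_of_le_of_le' tendsto_const_nhds hg ?_ ?_
      · filter_upwards [eventually_mem_nhdsWithin] with θ hθ
        exact div_nonneg (gfun_nonneg _) (le_of_lt hθ)
      · filter_upwards [eventually_mem_nhdsWithin, ev] with θ hθ h1
        have hθ : 0 < θ := hθ
        rw [div_le_iff₀ hθ]
        refine (gfun_le _ h1.le).trans ((min_le_right _ _).trans (le_of_eq ?_))
        ring
    have := hu.sub hz
    rw [sub_zero] at this
    refine this.congr' ?_
    filter_upwards [eventually_mem_nhdsWithin] with θ hθ
    have hθ : 0 < θ := hθ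
    unfold gfun
    field_simp
    ring
  have ie : ∀ θ, 0 < θ → Integrable (fun y => Real.exp (-(θ * X y))) μ := by
    intro θ hθ
    refine (integrable_const (1:ℝ)).mono' (by fun_prop : Continuous _).aestronglyMeasurable ?_
    filter_upwards [hX0] with y hy
    rw [Real.norm_of_nonneg (Real.exp_pos _).le]
    exact Real.exp_le_one_iff.2 (by nlinarith)
  have iF : ∀ θ, 0 < θ → ∫ y, (1 - Real.exp (-(θ * X y))) / θ ∂μ
      = (1 - Real.exp (-(θ * w θ))) / θ := by
    intro θ hθ
    rw [integral_div, integral_sub (integrable_const _) (ie θ hθ), hw θ hθ]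
    simp
  have L1 := quot w m hm
  have pw : ∀ y, Tendsto (fun θ : ℝ => (1 - Real.exp (-(θ * X y))) / θ) (𝓝[>] 0) (𝓝 (X y)) :=
    fun y => quot (fun _ => X y) (X y) tendsto_const_nhds
  have F0 : ∀ θ, 0 < θ → ∀ y, 0 ≤ X y → 0 ≤ (1 - Real.exp (-(θ * X y))) / θ := by
    intro θ hθ y hy
    have : Real.exp (-(θ * X y)) ≤ 1 := Real.exp_le_one_iff.2 (by nlinarith)
    exact div_nonneg (by linarith) hθ.le
  have Xint : Integrable X μ := by
    refine ⟨hX.aestronglyMeasurable, ?_⟩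
    rw [hasFiniteIntegral_iff_ofReal hX0]
    have fat := MeasureTheory.lintegral_liminf_le (μ := μ) (u := 𝓝[>] (0:ℝ))
      (f := fun θ y => ENNReal.ofReal ((1 - Real.exp (-(θ * X y))) / θ))
      (fun θ => ENNReal.measurable_ofReal.comp (by fun_prop : Continuous _).measurable)
    have e1 : ∀ y, liminf (fun θ : ℝ => ENNReal.ofReal ((1 - Real.exp (-(θ * X y))) / θ)) (𝓝[>] 0)
        = ENNReal.ofReal (X y) := fun y =>
      (((ENNReal.continuous_ofReal.tendsto _).comp (pw y))).liminf_eq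
    have e2 : liminf (fun θ : ℝ => ∫⁻ y, ENNReal.ofReal ((1 - Real.exp (-(θ * X y))) / θ) ∂μ)
        (𝓝[>] 0) = ENNReal.ofReal m := by
      refine Tendsto.liminf_eq ?_
      refine ((ENNReal.continuous_ofReal.tendsto _).comp L1).congr' ?_
      filter_upwards [eventually_mem_nhdsWithin] with θ hθ
      have hθ : 0 < θ := hθ
      simp only [Function.comp]
      rw [← iF θ hθ, ofReal_integral_eq_lintegral_ofReal]
      · exact ((integrable_const _).sub (ie θ hθ)).div_const _
      · filter_upwards [hX0] with y hy
        exact F0 θ hθ y hy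
    simp only [e1, e2] at fat
    exact fat.trans_lt ENNReal.ofReal_lt_top
  have L2 : Tendsto (fun θ : ℝ => ∫ y, (1 - Real.exp (-(θ * X y))) / θ ∂μ) (𝓝[>] 0)
      (𝓝 (∫ y, X y ∂μ)) := by
    refine MeasureTheory.tendsto_integral_filter_of_dominated_convergence X ?_ ?_ Xint ?_
    · exact Eventually.of_forall fun θ => (by fun_prop : Continuous _).aestronglyMeasurable
    · filter_upwards [eventually_mem_nhdsWithin] with θ hθ
      have hθ : 0 < θ := hθ
      filter_upwards [hX0] with y hy
      rw [Real.norm_of_nonneg (F0 θ hθ y hy), div_le_iff₀ hθ]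
      linarith [Real.add_one_le_exp (-(θ * X y))]
    · exact Eventually.of_forall pw
  refine tendsto_nhds_unique L2 (L1.congr' ?_)
  filter_upwards [eventually_mem_nhdsWithin] with θ hθ
  exact (iF θ hθ).symm

/-- The first moments of the MSB-process are given by the unique
solution of the moment linear system:
`∫ (λ₁y₁ + λ₂y₂) P_t(x,dy) = x₁π₁(t,λ) + x₂π₂(t,λ)`. -/
theorem first_moment_formula (B : BranchingMechanism)
    (V : ℝ → (ℝ × ℝ) → ℝ × ℝ)
    (hV : ∀ l : ℝ × ℝ, 0 ≤ l.1 → 0 ≤ l.2 → SolvesCumulant B l (fun t => V t l))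
    (P : ℝ → (ℝ × ℝ) → Measure (ℝ × ℝ))
    (hP : IsMSBTransition V P) :
    ∀ l : ℝ × ℝ, 0 ≤ l.1 → 0 ≤ l.2 →
      ∃ π : ℝ → ℝ × ℝ, SolvesMoment B l π ∧
        (∀ π' : ℝ → ℝ × ℝ, SolvesMoment B l π' → ∀ t : ℝ, 0 ≤ t → π' t = π t) ∧
        (∀ t : ℝ, 0 ≤ t → ∀ x ∈ Mset,
          ∫ y, (l.1 * y.1 + l.2 * y.2) ∂(P t x)
            = x.1 * (π t).1 + x.2 * (π t).2) := by
  intro l hl1 hl2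
  have hl : l ∈ Qd := ⟨hl1, hl2⟩
  have lim := ode_lim (Alin B) (rhoB B) (rhoB_nonneg B) (rhoB_small B) V
    (fun l hl => (hV l hl.1 hl.2).1) (fun l hl => (hV l hl.1 hl.2).2.1)
    (fun l hl => (cumulant_deriv B l _ (hV l hl.1 hl.2)).1)
    (fun l hl => (cumulant_deriv B l _ (hV l hl.1 hl.2)).2) l hl
  have lim1 : ∀ t, 0 ≤ t → Tendsto (fun θ : ℝ => θ⁻¹ * (V t (θ • l)).1) (𝓝[>] 0)
      (𝓝 (NormedSpace.exp (t • Alin B) l).1) := fun t ht =>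
    (continuous_fst.tendsto _).comp (lim t ht)
  have lim2 : ∀ t, 0 ≤ t → Tendsto (fun θ : ℝ => θ⁻¹ * (V t (θ • l)).2) (𝓝[>] 0)
      (𝓝 (NormedSpace.exp (t • Alin B) l).2) := fun t ht =>
    (continuous_snd.tendsto _).comp (lim t ht)
  have hθl : ∀ θ : ℝ, 0 < θ → θ • l ∈ Qd := fun θ hθ =>
    ⟨mul_nonneg hθ.le hl.1, mul_nonneg hθ.le hl.2⟩
  refine ⟨fun t => NormedSpace.exp (t • Alin B) l, ⟨by simp, ?_, ?_⟩, ?_, ?_⟩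
  · intro t ht
    constructor
    · refine ge_of_tendsto (lim1 t ht) ?_
      filter_upwards [eventually_mem_nhdsWithin] with θ hθ
      have hθ : 0 < θ := hθ
      have q := hθl θ hθ
      exact mul_nonneg (by positivity) ((hV _ q.1 q.2).2.1 t ht).1
    · refine ge_of_tendsto (lim2 t ht) ?_
      filter_upwards [eventually_mem_nhdsWithin] with θ hθ
      have hθ : 0 < θ := hθ
      have q := hθl θ hθ
      exact mul_nonneg (by positivity) ((hV _ q.1 q.2).2.1 t ht).2
  · intro t ht
    have d := (linear_exp_deriv (Alin B) l t).hasFDerivAt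
    rw [← Alin_fst, ← Alin_snd]
    constructor
    · have := d.fst.hasDerivAt.hasDerivWithinAt (s := Ici 0)
      simpa using this
    · have := d.snd.hasDerivAt.hasDerivWithinAt (s := Ici 0)
      simpa using this
  · intro π' hπ t ht
    obtain ⟨h0, -, hd⟩ := hπ
    rw [← sub_eq_zero]
    refine linear_unique (Alin B) (fun t => π' t - NormedSpace.exp (t • Alin B) l)
      (by simp [h0]) ?_ t ht
    intro s hs
    have d1 := (hd s hs).1.prodMk (hd s hs).2
    rw [← Alin_fst, ← Alin_snd] at d1
    have := d1.sub (linear_exp_deriv (Alin B) l s).hasDerivWithinAt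
    rw [map_sub]
    exact this
  · intro t ht x hx
    obtain ⟨hp, hs, hL⟩ := hP t ht x hx
    have hs' : ∀ᵐ y ∂(P t x), y ∈ Mset := hs
    refine moment_of_laplace (P t x) (fun y => l.1 * y.1 + l.2 * y.2) (by fun_prop) ?_
      (fun θ => x.1 * (θ⁻¹ * (V t (θ • l)).1) + x.2 * (θ⁻¹ * (V t (θ • l)).2)) _ ?_
      (((lim1 t ht).const_mul _).add ((lim2 t ht).const_mul _))
    · filter_upwards [hs'] with y hy
      obtain ⟨h, n, hn⟩ := hy
      have : (0 : ℝ) ≤ n := n.cast_nonneg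
      rw [hn]
      positivity
    · intro θ hθ
      have q := hθl θ hθ
      have e := hL (θ • l) q.1 q.2
      have e1 : ∀ y : ℝ × ℝ, θ * (l.1 * y.1 + l.2 * y.2) = (θ • l).1 * y.1 + (θ • l).2 * y.2 := by
        intro y; simp only [Prod.smul_fst, Prod.smul_snd, smul_eq_mul]; ring
      simp only [e1]
      rw [e]
      congr 2
      field_simp
end
end

section
/- Let (P_t)_{t≥0} be the transition probabilities of the MSB-process and π(t,1) = (π₁(t,1),π₂(t,1)) the solution of the moment linear system with initial value (1,1). Then for all x, y ∈ 𝕄 and t ≥ 0: (i) every coupling Π of P_t(x,·) and P_t(y,·) satisfies ∫_{𝕄×𝕄}(|u₁−v₁|+|u₂−v₂|) Π(du,dv) ≥ |(x₁−y₁)π₁(t,1) + (x₂−y₂)π₂(t,1)|; and (ii) there exists a coupling Π of P_t(x,·) and P_t(y,·) with ∫_{𝕄×𝕄}(|u₁−v₁|+|u₂−v₂|) Π(du,dv) ≤ |x₁−y₁|π₁(t,1) + |x₂−y₂|π₂(t,1). In particular the L¹-Wasserstein distance W₁(δ_xP_t, δ_yP_t) lies between these two bounds. -/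
open MeasureTheory Filter Set

noncomputable section

/-- `Pc` is a coupling of the probability measures `μ` and `ν` on `ℝ²`. -/
def IsCoupling (Pc : Measure ((ℝ × ℝ) × (ℝ × ℝ))) (μ ν : Measure (ℝ × ℝ)) : Prop :=
  IsProbabilityMeasure Pc ∧ Pc.map Prod.fst = μ ∧ Pc.map Prod.snd = ν

open scoped NNReal BoundedContinuousFunction

def lapE (l : ℝ≥0 × ℝ≥0) : (ℝ≥0 × ℝ≥0) →ᵇ ℝ :=
  BoundedContinuousFunction.ofNormedAddCommGroup
    (fun y => Real.exp (-((l.1 : ℝ) * y.1 + (l.2 : ℝ) * y.2))) (by fun_prop) 1 (by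
      intro y
      rw [Real.norm_eq_abs, Real.abs_exp]
      apply Real.exp_le_one_iff.2
      have : (0:ℝ) ≤ (l.1 : ℝ) * y.1 + (l.2 : ℝ) * y.2 := by positivity
      linarith)

theorem lapE_apply (l y : ℝ≥0 × ℝ≥0) :
    lapE l y = Real.exp (-((l.1 : ℝ) * y.1 + (l.2 : ℝ) * y.2)) := rfl

def lapM : Submonoid ((ℝ≥0 × ℝ≥0) →ᵇ ℝ) where
  carrier := range lapE
  one_mem' := ⟨0, by ext y; simp [lapE_apply]⟩
  mul_mem' := by
    rintro _ _ ⟨a, rfl⟩ ⟨b, rfl⟩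
    refine ⟨a + b, ?_⟩
    ext y
    simp only [lapE_apply, BoundedContinuousFunction.coe_mul, Pi.mul_apply, ← Real.exp_add]
    congr 1
    simp
    ring

def lapA : StarSubalgebra ℝ ((ℝ≥0 × ℝ≥0) →ᵇ ℝ) where
  toSubalgebra := Algebra.adjoin ℝ (lapM : Set ((ℝ≥0 × ℝ≥0) →ᵇ ℝ))
  star_mem' := by
    intro a ha
    have : star a = a := by ext; simp
    rw [this]; exact ha

theorem lap_unique_nn (μ ν : Measure (ℝ≥0 × ℝ≥0)) [IsFiniteMeasure μ] [IsFiniteMeasure ν]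
    (h : ∀ l, ∫ y, lapE l y ∂μ = ∫ y, lapE l y ∂ν) : μ = ν := by
  apply ext_of_forall_mem_subalgebra_integral_eq_of_polish (𝕜 := ℝ) (A := lapA)
  · intro x y hxy
    have key : ∃ l, lapE l x ≠ lapE l y := by
      by_contra hc
      push Not at hc
      apply hxy
      have h1 := hc (1, 0)
      have h2 := hc (0, 1)
      simp [lapE_apply] at h1 h2
      exact Prod.ext h1 h2
    obtain ⟨l, hl⟩ := key
    refine ⟨lapE l, ?_, hl⟩
    refine ⟨BoundedContinuousFunction.toContinuousMapStarₐ ℝ (lapE l), ?_, rfl⟩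
    refine ⟨lapE l, ?_, rfl⟩
    exact Algebra.subset_adjoin ⟨l, rfl⟩
  · intro g hg
    have hg' : g ∈ Submodule.span ℝ (lapM : Set ((ℝ≥0 × ℝ≥0) →ᵇ ℝ)) := by
      have h1 := Algebra.adjoin_eq_span ℝ (lapM : Set ((ℝ≥0 × ℝ≥0) →ᵇ ℝ))
      rw [lapM.closure_eq] at h1
      rw [← h1]
      exact hg
    induction hg' using Submodule.span_induction with
    | mem x hx => obtain ⟨l, rfl⟩ := hx; exact h l
    | zero => simp
    | add x y hx hy hx' hy' =>
      have e1 := hx' (by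
        have h1 := Algebra.adjoin_eq_span ℝ (lapM : Set ((ℝ≥0 × ℝ≥0) →ᵇ ℝ))
        rw [lapM.closure_eq] at h1
        rw [← h1] at hx
        exact hx)
      have e2 := hy' (by
        have h1 := Algebra.adjoin_eq_span ℝ (lapM : Set ((ℝ≥0 × ℝ≥0) →ᵇ ℝ))
        rw [lapM.closure_eq] at h1
        rw [← h1] at hy
        exact hy)
      simp only [BoundedContinuousFunction.coe_add, Pi.add_apply]
      rw [integral_add (x.integrable μ) (y.integrable μ),
        integral_add (x.integrable ν) (y.integrable ν), e1, e2]
    | smul a x hx hx' =>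
      have e1 := hx' (by
        have h1 := Algebra.adjoin_eq_span ℝ (lapM : Set ((ℝ≥0 × ℝ≥0) →ᵇ ℝ))
        rw [lapM.closure_eq] at h1
        rw [← h1] at hx
        exact hx)
      simp only [BoundedContinuousFunction.coe_smul]
      rw [integral_smul, integral_smul, e1]

def toNN (y : ℝ × ℝ) : ℝ≥0 × ℝ≥0 := (y.1.toNNReal, y.2.toNNReal)
def ofNN (y : ℝ≥0 × ℝ≥0) : ℝ × ℝ := (y.1, y.2)

theorem lap_unique (μ ν : Measure (ℝ × ℝ)) [IsFiniteMeasure μ] [IsFiniteMeasure ν]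
    (hμ : ∀ᵐ y ∂μ, 0 ≤ y.1 ∧ 0 ≤ y.2) (hν : ∀ᵐ y ∂ν, 0 ≤ y.1 ∧ 0 ≤ y.2)
    (h : ∀ l : ℝ × ℝ, 0 ≤ l.1 → 0 ≤ l.2 →
      ∫ y, Real.exp (-(l.1 * y.1 + l.2 * y.2)) ∂μ
        = ∫ y, Real.exp (-(l.1 * y.1 + l.2 * y.2)) ∂ν) : μ = ν := by
  have m1 : Measurable toNN := by unfold toNN; fun_prop
  have m2 : Measurable ofNN := by unfold ofNN; fun_prop
  have back : ∀ ρ : Measure (ℝ × ℝ), (∀ᵐ y ∂ρ, 0 ≤ y.1 ∧ 0 ≤ y.2) →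
      (ρ.map toNN).map ofNN = ρ := by
    intro ρ hρ
    rw [Measure.map_map m2 m1]
    conv_rhs => rw [← Measure.map_id (μ := ρ)]
    apply Measure.map_congr
    filter_upwards [hρ] with y hy
    simp [ofNN, toNN, hy.1, hy.2]
  have hi : ∀ ρ : Measure (ℝ × ℝ), (∀ᵐ y ∂ρ, 0 ≤ y.1 ∧ 0 ≤ y.2) → ∀ l,
      ∫ y, lapE l y ∂(ρ.map toNN) =
        ∫ y, Real.exp (-((l.1:ℝ) * y.1 + (l.2:ℝ) * y.2)) ∂ρ := by
    intro ρ hρ l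
    rw [integral_map m1.aemeasurable (lapE l).continuous.aestronglyMeasurable]
    apply integral_congr_ae
    filter_upwards [hρ] with y hy
    simp [lapE_apply, toNN, hy.1, hy.2]
  rw [← back μ hμ, ← back ν hν]
  congr 1
  apply lap_unique_nn
  intro l
  rw [hi μ hμ, hi ν hν]
  exact h (l.1, l.2) l.1.2 l.2.2

theorem mset_nonneg {y : ℝ × ℝ} (h : y ∈ Mset) : 0 ≤ y.1 ∧ 0 ≤ y.2 := by
  obtain ⟨h1, n, hn⟩ := h
  exact ⟨h1, by rw [hn]; positivity⟩

theorem ae_mset {μ : Measure (ℝ × ℝ)} (h : μ Msetᶜ = 0) : ∀ᵐ y ∂μ, y ∈ Mset := h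

theorem lap_conv {V : ℝ → (ℝ × ℝ) → ℝ × ℝ} {P : ℝ → (ℝ × ℝ) → Measure (ℝ × ℝ)}
    (hP : IsMSBTransition V P) {t : ℝ} (ht : 0 ≤ t) {a b : ℝ × ℝ} (ha : a ∈ Mset)
    (hb : b ∈ Mset) (hab : a + b ∈ Mset) :
    ((P t a).prod (P t b)).map (fun w => w.1 + w.2) = P t (a + b) := by
  obtain ⟨pa, sa, la⟩ := hP t ht a ha
  obtain ⟨pb, sb, lb⟩ := hP t ht b hb
  obtain ⟨pc, sc, lc⟩ := hP t ht _ hab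
  have m : Measurable (fun w : (ℝ × ℝ) × (ℝ × ℝ) => w.1 + w.2) := by fun_prop
  have : IsProbabilityMeasure (((P t a).prod (P t b)).map (fun w => w.1 + w.2)) :=
    Measure.isProbabilityMeasure_map m.aemeasurable
  apply lap_unique
  · rw [ae_map_iff m.aemeasurable (by measurability)]
    have h1 : ∀ᵐ w ∂((P t a).prod (P t b)), w.1 ∈ Mset :=
      Measure.quasiMeasurePreserving_fst.ae (ae_mset sa)
    have h2 : ∀ᵐ w ∂((P t a).prod (P t b)), w.2 ∈ Mset :=
      Measure.quasiMeasurePreserving_snd.ae (ae_mset sb)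
    filter_upwards [h1, h2] with w w1 w2
    have := mset_nonneg w1
    have := mset_nonneg w2
    simp only [Prod.fst_add, Prod.snd_add]
    constructor <;> linarith
  · filter_upwards [ae_mset sc] with y hy using mset_nonneg hy
  · intro l l1 l2
    rw [lc l l1 l2, integral_map m.aemeasurable (by
      apply Measurable.aestronglyMeasurable; fun_prop)]
    have : ∀ w : (ℝ × ℝ) × (ℝ × ℝ),
        Real.exp (-(l.1 * (w.1 + w.2).1 + l.2 * (w.1 + w.2).2)) =
        Real.exp (-(l.1 * w.1.1 + l.2 * w.1.2)) * Real.exp (-(l.1 * w.2.1 + l.2 * w.2.2)) := by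
      intro w
      rw [← Real.exp_add]; congr 1; simp only [Prod.fst_add, Prod.snd_add]; ring
    simp_rw [this]
    rw [integral_prod_mul (fun w : ℝ × ℝ => Real.exp (-(l.1 * w.1 + l.2 * w.2)))
      (fun w : ℝ × ℝ => Real.exp (-(l.1 * w.1 + l.2 * w.2))), la l l1 l2, lb l l1 l2,
      ← Real.exp_add]
    congr 1; simp only [Prod.fst_add, Prod.snd_add]; ring

/-- first-moment claim implies the Wasserstein bounds -/
theorem wass_of_moment {V : ℝ → (ℝ × ℝ) → ℝ × ℝ} {P : ℝ → (ℝ × ℝ) → Measure (ℝ × ℝ)}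
    (hP : IsMSBTransition V P) {t : ℝ} (ht : 0 ≤ t) (p : ℝ × ℝ) (hp : 0 ≤ p.1 ∧ 0 ≤ p.2)
    (hm : ∀ x ∈ Mset, Integrable (fun u : ℝ × ℝ => u.1 + u.2) (P t x) ∧
      ∫ u, (u.1 + u.2) ∂(P t x) = x.1 * p.1 + x.2 * p.2)
    {x y : ℝ × ℝ} (hx : x ∈ Mset) (hy : y ∈ Mset) :
      (∀ Pc : Measure ((ℝ × ℝ) × (ℝ × ℝ)), IsCoupling Pc (P t x) (P t y) →
        ENNReal.ofReal |(x.1 - y.1) * p.1 + (x.2 - y.2) * p.2|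
          ≤ ∫⁻ w, ENNReal.ofReal (|w.1.1 - w.2.1| + |w.1.2 - w.2.2|) ∂Pc) ∧
      (∃ Pc : Measure ((ℝ × ℝ) × (ℝ × ℝ)), IsCoupling Pc (P t x) (P t y) ∧
        ∫⁻ w, ENNReal.ofReal (|w.1.1 - w.2.1| + |w.1.2 - w.2.2|) ∂Pc
          ≤ ENNReal.ofReal (|x.1 - y.1| * p.1 + |x.2 - y.2| * p.2)) := by
  constructor
  · rintro Pc ⟨hPc, h1, h2⟩
    obtain ⟨ix, ex⟩ := hm x hx
    obtain ⟨iy, ey⟩ := hm y hy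
    rw [← h1] at ix ex
    rw [← h2] at iy ey
    rw [integral_map measurable_fst.aemeasurable ix.aestronglyMeasurable] at ex
    rw [integral_map measurable_snd.aemeasurable iy.aestronglyMeasurable] at ey
    have ix' := (integrable_map_measure ix.aestronglyMeasurable measurable_fst.aemeasurable).1 ix
    have iy' := (integrable_map_measure iy.aestronglyMeasurable measurable_snd.aemeasurable).1 iy
    have e : (x.1 - y.1) * p.1 + (x.2 - y.2) * p.2 =
        ∫ w, ((w.1.1 + w.1.2) - (w.2.1 + w.2.2)) ∂Pc := by
      have := integral_sub ix' iy'
      simp only [Function.comp] at this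
      rw [this, ex, ey]; ring
    rw [e, ← Real.norm_eq_abs, ofReal_norm]
    refine (enorm_integral_le_lintegral_enorm _).trans (lintegral_mono fun w => ?_)
    rw [← ofReal_norm, Real.norm_eq_abs]
    apply ENNReal.ofReal_le_ofReal
    calc |w.1.1 + w.1.2 - (w.2.1 + w.2.2)| = |(w.1.1 - w.2.1) + (w.1.2 - w.2.2)| := by
          congr 1; ring
      _ ≤ _ := abs_add_le _ _
  · obtain ⟨x1, nx, hnx⟩ := id hx
    obtain ⟨y1, ny, hny⟩ := id hy
    set a : ℝ × ℝ := (min x.1 y.1, ((min nx ny : ℕ) : ℝ)) with ha'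
    set b : ℝ × ℝ := (x.1 - min x.1 y.1, ((nx - min nx ny : ℕ) : ℝ)) with hb'
    set c : ℝ × ℝ := (y.1 - min x.1 y.1, ((ny - min nx ny : ℕ) : ℝ)) with hc'
    have ha : a ∈ Mset := ⟨le_min x1 y1, _, rfl⟩
    have hb : b ∈ Mset := ⟨sub_nonneg.2 (min_le_left _ _), _, rfl⟩
    have hc : c ∈ Mset := ⟨sub_nonneg.2 (min_le_right _ _), _, rfl⟩
    have hab : a + b = x := by
      apply Prod.ext
      · simp [ha', hb']
      · simp only [ha', hb', Prod.snd_add, hnx]; norm_cast; omega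
    have hac : a + c = y := by
      apply Prod.ext
      · simp [ha', hc']
      · simp only [ha', hc', Prod.snd_add, hny]; norm_cast; omega
    obtain ⟨pa, sa, -⟩ := hP t ht a ha
    obtain ⟨pb, sb, -⟩ := hP t ht b hb
    obtain ⟨pc, sc, -⟩ := hP t ht c hc
    have cab := lap_conv hP ht ha hb (hab ▸ hx)
    have cac := lap_conv hP ht ha hc (hac ▸ hy)
    rw [hab] at cab
    rw [hac] at cac
    let F : (ℝ × ℝ) × ((ℝ × ℝ) × (ℝ × ℝ)) → (ℝ × ℝ) × (ℝ × ℝ) :=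
      fun w => (w.1 + w.2.1, w.1 + w.2.2)
    have mF : Measurable F := by fun_prop
    let Q := (P t a).prod ((P t b).prod (P t c))
    have mp1 : (Q.map (fun w => (w.1, w.2.1))) = (P t a).prod (P t b) := by
      have := (MeasurePreserving.id (P t a)).prod
        (measurePreserving_fst (μ := P t b) (ν := P t c))
      exact this.map_eq
    have mp2 : (Q.map (fun w => (w.1, w.2.2))) = (P t a).prod (P t c) := by
      have := (MeasurePreserving.id (P t a)).prod
        (measurePreserving_snd (μ := P t b) (ν := P t c))
      exact this.map_eq
    refine ⟨Q.map F, ⟨Measure.isProbabilityMeasure_map mF.aemeasurable, ?_, ?_⟩, ?_⟩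
    · rw [Measure.map_map measurable_fst mF, ← cab, ← mp1, Measure.map_map (by fun_prop)
        (by fun_prop)]
      rfl
    · rw [Measure.map_map measurable_snd mF, ← cac, ← mp2, Measure.map_map (by fun_prop)
        (by fun_prop)]
      rfl
    · rw [lintegral_map (by fun_prop) mF]
      have h1 : ∀ᵐ w ∂Q, w.2.1 ∈ Mset := 
        (Measure.quasiMeasurePreserving_fst.comp Measure.quasiMeasurePreserving_snd).ae
          (ae_mset sb)
      have h2 : ∀ᵐ w ∂Q, w.2.2 ∈ Mset := 
        (Measure.quasiMeasurePreserving_snd.comp Measure.quasiMeasurePreserving_snd).ae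
          (ae_mset sc)
      calc ∫⁻ w, ENNReal.ofReal (|(F w).1.1 - (F w).2.1| + |(F w).1.2 - (F w).2.2|) ∂Q
          ≤ ∫⁻ w, (ENNReal.ofReal (w.2.1.1 + w.2.1.2) + ENNReal.ofReal (w.2.2.1 + w.2.2.2)) ∂Q := by
            apply lintegral_mono_ae
            filter_upwards [h1, h2] with w w1 w2
            obtain ⟨u1, u2⟩ := mset_nonneg w1
            obtain ⟨v1, v2⟩ := mset_nonneg w2
            rw [← ENNReal.ofReal_add (by positivity) (by positivity)]
            apply ENNReal.ofReal_le_ofReal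
            simp only [F, Prod.fst_add, Prod.snd_add, add_sub_add_left_eq_sub]
            have := abs_sub w.2.1.1 w.2.2.1
            have := abs_sub w.2.1.2 w.2.2.2
            rw [abs_of_nonneg u1, abs_of_nonneg v1] at *
            rw [abs_of_nonneg u2, abs_of_nonneg v2] at *
            linarith
        _ = ∫⁻ u, ENNReal.ofReal (u.1 + u.2) ∂(P t b) + ∫⁻ u, ENNReal.ofReal (u.1 + u.2) ∂(P t c) := by
            rw [lintegral_add_left (by fun_prop)]
            congr 1
            · rw [← (measurePreserving_fst.comp measurePreserving_snd :
                MeasurePreserving (Prod.fst ∘ Prod.snd) Q (P t b)).lintegral_comp (by fun_prop)]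
              rfl
            · rw [← (measurePreserving_snd.comp measurePreserving_snd :
                MeasurePreserving (Prod.snd ∘ Prod.snd) Q (P t c)).lintegral_comp (by fun_prop)]
              rfl
        _ = ENNReal.ofReal (b.1 * p.1 + b.2 * p.2) + ENNReal.ofReal (c.1 * p.1 + c.2 * p.2) := by
            rw [← (hm b hb).2, ← (hm c hc).2,
              ofReal_integral_eq_lintegral_ofReal (hm b hb).1 _,
              ofReal_integral_eq_lintegral_ofReal (hm c hc).1 _]
            · filter_upwards [ae_mset sc] with u hu
              have := mset_nonneg hu
              exact add_nonneg this.1 this.2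
            · filter_upwards [ae_mset sb] with u hu
              have := mset_nonneg hu
              exact add_nonneg this.1 this.2
        _ ≤ _ := by
            obtain ⟨b1, b2⟩ := mset_nonneg hb
            obtain ⟨c1, c2⟩ := mset_nonneg hc
            obtain ⟨p1, p2⟩ := hp
            rw [← ENNReal.ofReal_add (by positivity) (by positivity)]
            apply ENNReal.ofReal_le_ofReal
            have e1 : b.1 + c.1 = |x.1 - y.1| := by
              simp only [hb', hc']
              rcases le_total x.1 y.1 with h | h
              · rw [min_eq_left h, abs_of_nonpos (by linarith)]; ring
              · rw [min_eq_right h, abs_of_nonneg (by linarith)]; ring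
            have e2 : b.2 + c.2 = |x.2 - y.2| := by
              simp only [hb', hc', hnx, hny]
              rcases le_total nx ny with h | h
              · rw [min_eq_left h, abs_of_nonpos (by simpa using h)]
                push_cast [h]; simp
              · rw [min_eq_right h, abs_of_nonneg (by simpa using h)]
                push_cast [h]; simp
            rw [← e1, ← e2]
            apply le_of_eq; ring
/-- `f(a) = e^{-a} - 1 + a`. -/
def fE (a : ℝ) : ℝ := Real.exp (-a) - 1 + a

theorem fE_nonneg (a : ℝ) : 0 ≤ fE a := by
  have := Real.add_one_le_exp (-a); unfold fE; linarith

theorem fE_le_sq {a : ℝ} (h : -1 ≤ a) : fE a ≤ a ^ 2 := by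
  unfold fE
  rcases le_total a 1 with h1 | h1
  · have := (abs_le.1 (Real.abs_exp_sub_one_sub_id_le (x := -a) (by rw [abs_neg]; exact abs_le.2 ⟨h, h1⟩))).2
    nlinarith
  · have : Real.exp (-a) ≤ 1 := Real.exp_le_one_iff.2 (by linarith)
    nlinarith

theorem fE_le_abs {a : ℝ} (h : -1 ≤ a) : fE a ≤ |a| := by
  rcases le_total a 0 with h1 | h1
  · have := fE_le_sq h
    rw [abs_of_nonpos h1]; nlinarith
  · rw [abs_of_nonneg h1]
    have : Real.exp (-a) ≤ 1 := Real.exp_le_one_iff.2 (by linarith)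
    unfold fE; linarith

/-- `g(b) = min b b²`. -/
def gM (b : ℝ) : ℝ := min b (b ^ 2)

theorem fE_le_gM {a b : ℝ} (h : -1 ≤ a) (hab : |a| ≤ b) : fE a ≤ gM b := by
  refine le_min ((fE_le_abs h).trans hab) ((fE_le_sq h).trans ?_)
  rw [← sq_abs]
  have := abs_nonneg a
  gcongr

theorem gM_nonneg {b : ℝ} (h : 0 ≤ b) : 0 ≤ gM b := le_min h (sq_nonneg b)

theorem gM_mul {c b : ℝ} (hc : 0 ≤ c) (hb : 0 ≤ b) : gM (c * b) ≤ (c + c ^ 2) * gM b := by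
  unfold gM
  rcases min_cases b (b^2) with ⟨h, _⟩ | ⟨h, _⟩ <;> rw [h]
  · refine (min_le_left _ _).trans ?_
    have : 0 ≤ c ^ 2 * b := by positivity
    nlinarith
  · refine (min_le_right _ _).trans ?_
    have : 0 ≤ c * b ^ 2 := by positivity
    nlinarith

theorem gM_meas : Measurable gM := by unfold gM; fun_prop

def hN (z : ℝ × ℝ) : ℝ := z.1 + |z.2|

theorem hN_meas : Measurable hN := by unfold hN; fun_prop

section MSB

variable (B : BranchingMechanism)

theorem ae1 : ∀ᵐ z ∂B.n1, 0 ≤ z.1 ∧ 0 ≤ z.2 ∧ (z.2 = 0 ∨ 1 ≤ z.2) := by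
  have : ∀ᵐ z ∂B.n1, z ∈ Mset := B.n1_supp
  filter_upwards [this] with z hz
  obtain ⟨h, n, hn⟩ := hz
  refine ⟨h, by rw [hn]; positivity, ?_⟩
  rcases Nat.eq_zero_or_pos n with h0 | h0
  · left; simp [hn, h0]
  · right; rw [hn]; exact_mod_cast h0

theorem ae2 : ∀ᵐ z ∂B.n2, 0 ≤ z.1 ∧ -1 ≤ z.2 := by
  have : ∀ᵐ z ∂B.n2, z ∈ Mm1set := B.n2_supp
  filter_upwards [this] with z hz
  obtain ⟨h, n, hn, hz⟩ := hz
  exact ⟨h, by rw [hz]; exact_mod_cast hn⟩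

theorem int1 : Integrable (fun z : ℝ × ℝ => min z.1 (z.1 ^ 2) + z.2) B.n1 := by
  refine ⟨by apply Measurable.aestronglyMeasurable; fun_prop, ?_⟩
  rw [hasFiniteIntegral_iff_ofReal]
  · exact lt_top_iff_ne_top.2 B.n1_moment
  · filter_upwards [ae1 B] with z hz
    exact add_nonneg (le_min hz.1 (sq_nonneg _)) hz.2.1

theorem int1_2 : Integrable (fun z : ℝ × ℝ => z.2) B.n1 := by
  refine (int1 B).mono' (by apply Measurable.aestronglyMeasurable; fun_prop) ?_
  filter_upwards [ae1 B] with z hz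
  rw [Real.norm_eq_abs, abs_of_nonneg hz.2.1]
  have : 0 ≤ min z.1 (z.1 ^ 2) := le_min hz.1 (sq_nonneg _)
  linarith

theorem int1_g : Integrable (fun z : ℝ × ℝ => gM (hN z)) B.n1 := by
  refine ((int1 B).const_mul 2).mono' (gM_meas.comp hN_meas).aestronglyMeasurable ?_
  filter_upwards [ae1 B] with z hz
  obtain ⟨h1, h2, h3⟩ := hz
  have hh : 0 ≤ hN z := by unfold hN; positivity
  rw [Real.norm_eq_abs, abs_of_nonneg (gM_nonneg hh)]
  have h0 : 0 ≤ min z.1 (z.1 ^ 2) := le_min h1 (sq_nonneg _)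
  have e : hN z = z.1 + z.2 := by unfold hN; rw [abs_of_nonneg h2]
  rw [e]
  rcases h3 with h3 | h3
  · rw [h3]; unfold gM; simp only [add_zero]; linarith
  · refine (min_le_left _ _).trans ?_
    rcases le_total z.1 1 with h | h
    · linarith
    · have : min z.1 (z.1^2) = z.1 := min_eq_left (by nlinarith)
      rw [this]; linarith

theorem int2_h : Integrable hN B.n2 := by
  refine ⟨hN_meas.aestronglyMeasurable, ?_⟩
  rw [hasFiniteIntegral_iff_ofReal]
  · exact lt_top_iff_ne_top.2 B.n2_moment
  · filter_upwards [ae2 B] with z hz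
    exact add_nonneg hz.1 (abs_nonneg _)

theorem int2_1 : Integrable (fun z : ℝ × ℝ => z.1) B.n2 := by
  refine (int2_h B).mono' (by apply Measurable.aestronglyMeasurable; fun_prop) ?_
  filter_upwards [ae2 B] with z hz
  rw [Real.norm_eq_abs, abs_of_nonneg hz.1]
  unfold hN
  have := abs_nonneg z.2
  linarith

theorem int2_2 : Integrable (fun z : ℝ × ℝ => z.2) B.n2 := by
  refine (int2_h B).mono' (by apply Measurable.aestronglyMeasurable; fun_prop) ?_
  filter_upwards [ae2 B] with z hz
  rw [Real.norm_eq_abs]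
  unfold hN
  have := hz.1
  linarith

theorem int2_g : Integrable (fun z : ℝ × ℝ => gM (hN z)) B.n2 := by
  refine (int2_h B).mono' (gM_meas.comp hN_meas).aestronglyMeasurable ?_
  filter_upwards [ae2 B] with z hz
  have hh : 0 ≤ hN z := add_nonneg hz.1 (abs_nonneg _)
  rw [Real.norm_eq_abs, abs_of_nonneg (gM_nonneg hh)]
  exact min_le_left _ _

/-- the pairing bound -/
theorem pair_le {M : ℝ} {l z : ℝ × ℝ} (h1 : 0 ≤ l.1) (h2 : 0 ≤ l.2) (m1 : l.1 ≤ M) (m2 : l.2 ≤ M)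
    (hz : 0 ≤ z.1) : |l.1 * z.1 + l.2 * z.2| ≤ M * hN z := by
  unfold hN
  refine (abs_add_le _ _).trans ?_
  rw [abs_mul, abs_mul, abs_of_nonneg h1, abs_of_nonneg h2, abs_of_nonneg hz]
  have := abs_nonneg z.2
  nlinarith [mul_le_mul_of_nonneg_right m1 hz, mul_le_mul_of_nonneg_right m2 this]

def box (M : ℝ) : Set (ℝ × ℝ) := {l | 0 ≤ l.1 ∧ 0 ≤ l.2 ∧ l.1 ≤ M ∧ l.2 ≤ M}

theorem bound1 {M : ℝ} (hM : 0 ≤ M) {l : ℝ × ℝ} (hl : l ∈ box M) :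
    ∀ᵐ z ∂B.n1, ‖fE (l.1 * z.1 + l.2 * z.2)‖ ≤ (M + M ^ 2) * gM (hN z) := by
  filter_upwards [ae1 B] with z hz
  obtain ⟨h1, h2, m1, m2⟩ := hl
  rw [Real.norm_eq_abs, abs_of_nonneg (fE_nonneg _)]
  have hh : 0 ≤ hN z := add_nonneg hz.1 (abs_nonneg _)
  refine (fE_le_gM ?_ (pair_le h1 h2 m1 m2 hz.1)).trans (gM_mul hM hh)
  have := mul_nonneg h1 hz.1
  have := mul_nonneg h2 hz.2.1
  linarith

theorem one_sub_exp_bound {a M : ℝ} (hM : 0 ≤ M) (h : -M ≤ a) :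
    |1 - Real.exp (-a)| ≤ Real.exp M * |a| := by
  have e1 : 1 ≤ Real.exp M := Real.one_le_exp hM
  rcases le_total 0 a with h0 | h0
  · have i1 : Real.exp (-a) ≤ 1 := Real.exp_le_one_iff.2 (by linarith)
    have i2 := Real.add_one_le_exp (-a)
    rw [abs_of_nonneg (by linarith), abs_of_nonneg h0]
    nlinarith
  · have i1 : 1 ≤ Real.exp (-a) := Real.one_le_exp (by linarith)
    have i2 := Real.add_one_le_exp a
    have i3 : Real.exp (-a) ≤ Real.exp M := Real.exp_le_exp.2 (by linarith)
    have i4 : Real.exp (-a) * Real.exp a = 1 := by rw [← Real.exp_add]; simp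
    rw [abs_of_nonpos (by linarith), abs_of_nonpos h0]
    have i5 := mul_le_mul_of_nonneg_left i2 (Real.exp_pos (-a)).le
    rw [i4] at i5
    nlinarith

theorem bound2 {M : ℝ} (hM : 0 ≤ M) {l : ℝ × ℝ} (hl : l ∈ box M) :
    ∀ᵐ z ∂B.n2, ‖1 - Real.exp (-(l.1 * z.1 + l.2 * z.2))‖ ≤ Real.exp M * (M * hN z) := by
  filter_upwards [ae2 B] with z hz
  obtain ⟨h1, h2, m1, m2⟩ := hl
  rw [Real.norm_eq_abs]
  refine (one_sub_exp_bound hM ?_).trans (by gcongr; exact pair_le h1 h2 m1 m2 hz.1)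
  have := mul_nonneg h1 hz.1
  nlinarith [mul_le_mul_of_nonneg_left hz.2 h2]

theorem mem_box {l : ℝ × ℝ} (h1 : 0 ≤ l.1) (h2 : 0 ≤ l.2) : l ∈ box (l.1 + l.2) :=
  ⟨h1, h2, by linarith, by linarith⟩

theorem int_f1 {l : ℝ × ℝ} (h1 : 0 ≤ l.1) (h2 : 0 ≤ l.2) :
    Integrable (fun z : ℝ × ℝ => fE (l.1 * z.1 + l.2 * z.2)) B.n1 :=
  ((int1_g B).const_mul _).mono' (by apply Measurable.aestronglyMeasurable; unfold fE; fun_prop)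
    (bound1 B (add_nonneg h1 h2) (mem_box h1 h2))

theorem int_e2 {l : ℝ × ℝ} (h1 : 0 ≤ l.1) (h2 : 0 ≤ l.2) :
    Integrable (fun z : ℝ × ℝ => 1 - Real.exp (-(l.1 * z.1 + l.2 * z.2))) B.n2 :=
  (((int2_h B).const_mul _).const_mul _).mono'
    (by apply Measurable.aestronglyMeasurable; fun_prop)
    (bound2 B (add_nonneg h1 h2) (mem_box h1 h2))

def m12 : ℝ := ∫ z, z.2 ∂B.n1
def m21 : ℝ := B.a21 + ∫ z, z.1 ∂B.n2
def m22 : ℝ := ∫ z, z.2 ∂B.n2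

def R1 (l : ℝ × ℝ) : ℝ := B.alpha * l.1 ^ 2 + ∫ z, fE (l.1 * z.1 + l.2 * z.2) ∂B.n1
def R2 (l : ℝ × ℝ) : ℝ := ∫ z, fE (l.1 * z.1 + l.2 * z.2) ∂B.n2

theorem phi1_eq {l : ℝ × ℝ} (h1 : 0 ≤ l.1) (h2 : 0 ≤ l.2) :
    mPhi1 B l = -B.a11 * l.1 + m12 B * l.2 - R1 B l := by
  unfold mPhi1 R1 m12
  have : ∫ z, (Real.exp (-(l.1 * z.1 + l.2 * z.2)) - 1 + l.1 * z.1) ∂B.n1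
      = ∫ z, fE (l.1 * z.1 + l.2 * z.2) ∂B.n1 - l.2 * ∫ z, z.2 ∂B.n1 := by
    rw [← integral_const_mul, ← integral_sub (int_f1 B h1 h2) ((int1_2 B).const_mul _)]
    congr 1; ext z; unfold fE; ring
  rw [this]; ring

theorem phi2_eq {l : ℝ × ℝ} (h1 : 0 ≤ l.1) (h2 : 0 ≤ l.2) :
    mPhi2 B l = m21 B * l.1 + m22 B * l.2 - R2 B l := by
  unfold mPhi2 R2 m21 m22
  have : ∫ z, fE (l.1 * z.1 + l.2 * z.2) ∂B.n2 = l.1 * ∫ z, z.1 ∂B.n2 + l.2 * ∫ z, z.2 ∂B.n2 -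
      ∫ z, (1 - Real.exp (-(l.1 * z.1 + l.2 * z.2))) ∂B.n2 := by
    rw [← integral_const_mul, ← integral_const_mul,
      ← integral_add ((int2_1 B).const_mul _) ((int2_2 B).const_mul _),
      ← integral_sub (f := fun z : ℝ × ℝ => l.1 * z.1 + l.2 * z.2)
        (((int2_1 B).const_mul _).add ((int2_2 B).const_mul _)) (int_e2 B h1 h2)]
    congr 1; ext z; simp only [fE]; ring
  rw [this]; ring

theorem cont1 {M : ℝ} (hM : 0 ≤ M) : ContinuousOn (mPhi1 B) (box M) := by
  have h : ContinuousOn (fun l : ℝ × ℝ => -B.a11 * l.1 + m12 B * l.2 - R1 B l) (box M) := by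
    unfold R1
    refine ContinuousOn.sub (by fun_prop) (ContinuousOn.add (by fun_prop) ?_)
    refine continuousOn_of_dominated (bound := fun z => (M + M ^ 2) * gM (hN z)) ?_
      (fun l hl => bound1 B hM hl) ((int1_g B).const_mul _) ?_
    · intro l hl
      exact (int_f1 B hl.1 hl.2.1).aestronglyMeasurable
    · apply ae_of_all; intro z; unfold fE; fun_prop
  exact h.congr fun l hl => phi1_eq B hl.1 hl.2.1

theorem cont2 {M : ℝ} (hM : 0 ≤ M) : ContinuousOn (mPhi2 B) (box M) := by
  unfold mPhi2
  refine ContinuousOn.add (by fun_prop) ?_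
  refine continuousOn_of_dominated (bound := fun z => Real.exp M * (M * hN z)) ?_
    (fun l hl => bound2 B hM hl) (((int2_h B).const_mul _).const_mul _) ?_
  · intro l hl
    exact (int_e2 B hl.1 hl.2.1).aestronglyMeasurable
  · apply ae_of_all; intro z; fun_prop

theorem R1_nonneg (l : ℝ × ℝ) : 0 ≤ R1 B l :=
  add_nonneg (mul_nonneg B.alpha_nonneg (sq_nonneg _)) (integral_nonneg fun _ => fE_nonneg _)

theorem R2_nonneg (l : ℝ × ℝ) : 0 ≤ R2 B l := integral_nonneg fun _ => fE_nonneg _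

theorem int_gc {n : Measure (ℝ × ℝ)} (hn : ∀ᵐ z ∂n, 0 ≤ z.1)
    (hg : Integrable (fun z : ℝ × ℝ => gM (hN z)) n) {c : ℝ} (hc : 0 ≤ c) :
    Integrable (fun z : ℝ × ℝ => gM (c * hN z)) n := by
  refine (hg.const_mul (c + c^2)).mono'
    (gM_meas.comp (hN_meas.const_mul c)).aestronglyMeasurable ?_
  filter_upwards [hn] with z hz
  have hh : 0 ≤ hN z := add_nonneg hz (abs_nonneg _)
  rw [Real.norm_eq_abs, abs_of_nonneg (gM_nonneg (by positivity))]
  exact gM_mul hc hh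

def rem (c : ℝ) : ℝ := B.alpha * c ^ 2 + ∫ z, gM (c * hN z) ∂B.n1 + ∫ z, gM (c * hN z) ∂B.n2

theorem R1_le {c : ℝ} (hc : 0 ≤ c) {l : ℝ × ℝ} (hl : l ∈ box c) :
    R1 B l ≤ rem B c := by
  obtain ⟨h1, h2, c1, c2⟩ := hl
  unfold R1 rem
  have e1 : B.alpha * l.1 ^ 2 ≤ B.alpha * c ^ 2 := by
    have := B.alpha_nonneg
    gcongr
  have e2 : ∫ z, fE (l.1 * z.1 + l.2 * z.2) ∂B.n1 ≤ ∫ z, gM (c * hN z) ∂B.n1 := by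
    apply integral_mono_ae (int_f1 B h1 h2)
      (int_gc ((ae1 B).mono fun z hz => hz.1) (int1_g B) hc)
    filter_upwards [ae1 B] with z hz
    refine fE_le_gM ?_ (pair_le h1 h2 c1 c2 hz.1)
    have := mul_nonneg h1 hz.1
    have := mul_nonneg h2 hz.2.1
    linarith
  have e3 : 0 ≤ ∫ z, gM (c * hN z) ∂B.n2 := by
    apply integral_nonneg_of_ae
    filter_upwards [ae2 B] with z hz
    have hh : 0 ≤ hN z := add_nonneg hz.1 (abs_nonneg _)
    exact gM_nonneg (by positivity)
  linarith

theorem R2_le {c : ℝ} (hc : 0 ≤ c) (hc1 : c ≤ 1) {l : ℝ × ℝ} (hl : l ∈ box c) :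
    R2 B l ≤ rem B c := by
  obtain ⟨h1, h2, c1, c2⟩ := hl
  unfold R2 rem
  have e1 : 0 ≤ B.alpha * c ^ 2 := mul_nonneg B.alpha_nonneg (sq_nonneg _)
  have e2 : ∫ z, fE (l.1 * z.1 + l.2 * z.2) ∂B.n2 ≤ ∫ z, gM (c * hN z) ∂B.n2 := by
    apply integral_mono_of_nonneg (ae_of_all _ fun z => fE_nonneg _)
      (int_gc ((ae2 B).mono fun z hz => hz.1) (int2_g B) hc)
    filter_upwards [ae2 B] with z hz
    refine fE_le_gM ?_ (pair_le h1 h2 c1 c2 hz.1)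
    have := mul_nonneg h1 hz.1
    nlinarith [mul_le_mul_of_nonneg_left hz.2 h2]
  have e3 : 0 ≤ ∫ z, gM (c * hN z) ∂B.n1 := by
    apply integral_nonneg_of_ae
    filter_upwards [ae1 B] with z hz
    have hh : 0 ≤ hN z := add_nonneg hz.1 (abs_nonneg _)
    exact gM_nonneg (by positivity)
  linarith

theorem lim_gc {n : Measure (ℝ × ℝ)} (hn : ∀ᵐ z ∂n, 0 ≤ z.1)
    (hg : Integrable (fun z : ℝ × ℝ => gM (hN z)) n) {c : ℕ → ℝ} (hc : ∀ k, 0 < c k)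
    (hc1 : ∀ k, c k ≤ 1) (hlim : Tendsto c atTop (nhds 0)) :
    Tendsto (fun k => (∫ z, gM (c k * hN z) ∂n) / c k) atTop (nhds 0) := by
  have : Tendsto (fun k => ∫ z, gM (c k * hN z) / c k ∂n) atTop (nhds (∫ _, (0:ℝ) ∂n)) := by
    apply tendsto_integral_of_dominated_convergence (fun z => 2 * gM (hN z))
    · intro k
      exact ((gM_meas.comp (hN_meas.const_mul (c k))).div_const _).aestronglyMeasurable
    · exact hg.const_mul 2
    · intro k
      filter_upwards [hn] with z hz
      have hh : 0 ≤ hN z := add_nonneg hz (abs_nonneg _)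
      have hk := hc k
      rw [Real.norm_eq_abs, abs_of_nonneg (div_nonneg (gM_nonneg (by positivity)) hk.le),
        div_le_iff₀ hk]
      refine (gM_mul hk.le hh).trans ?_
      have := gM_nonneg hh
      have : c k + c k ^ 2 ≤ 2 * c k := by nlinarith [hc1 k]
      nlinarith
    · filter_upwards [hn] with z hz
      have hh : 0 ≤ hN z := add_nonneg hz (abs_nonneg _)
      have l2 : Tendsto (fun k => c k * (hN z)^2) atTop (nhds 0) := by
        simpa using hlim.mul_const ((hN z)^2)
      refine squeeze_zero (fun k => div_nonneg (gM_nonneg (mul_nonneg (hc k).le hh)) (hc k).le)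
        (fun k => ?_) l2
      rw [div_le_iff₀ (hc k)]
      refine (min_le_right _ _).trans (le_of_eq ?_)
      ring
  simpa [integral_div] using this

theorem lim_rem {c : ℕ → ℝ} (hc : ∀ k, 0 < c k)
    (hc1 : ∀ k, c k ≤ 1) (hlim : Tendsto c atTop (nhds 0)) :
    Tendsto (fun k => rem B (c k) / c k) atTop (nhds 0) := by
  have h1 := lim_gc ((ae1 B).mono fun z hz => hz.1) (int1_g B) hc hc1 hlim
  have h2 := lim_gc ((ae2 B).mono fun z hz => hz.1) (int2_g B) hc hc1 hlim
  have h0 : Tendsto (fun k => B.alpha * c k) atTop (nhds 0) := by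
    simpa using hlim.const_mul B.alpha
  have := (h0.add h1).add h2
  simp only [add_zero] at this
  refine this.congr fun k => ?_
  unfold rem
  have := (hc k).ne'
  field_simp

end MSB
section MSB2

variable (B : BranchingMechanism)

def quad : Set (ℝ × ℝ) := {l | 0 ≤ l.1 ∧ 0 ≤ l.2}

theorem cont_quad {F : ℝ × ℝ → ℝ} (h : ∀ M : ℝ, 0 ≤ M → ContinuousOn F (box M)) :
    ContinuousOn F quad := by
  intro l hl
  have hM : 0 ≤ l.1 + l.2 + 1 := by have := hl.1; have := hl.2; linarith
  refine (h _ hM l ⟨hl.1, hl.2, by linarith [hl.2], by linarith [hl.1]⟩).mono_of_mem_nhdsWithin ?_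
  have o : IsOpen {z : ℝ × ℝ | z.1 < l.1 + l.2 + 1 ∧ z.2 < l.1 + l.2 + 1} :=
    (isOpen_lt continuous_fst continuous_const).and (isOpen_lt continuous_snd continuous_const)
  have : {z : ℝ × ℝ | z.1 < l.1 + l.2 + 1 ∧ z.2 < l.1 + l.2 + 1} ∈ nhds l :=
    o.mem_nhds ⟨by linarith [hl.2], by linarith [hl.1]⟩
  filter_upwards [mem_nhdsWithin_of_mem_nhds this, self_mem_nhdsWithin] with z h1 h2
  exact ⟨h2.1, h2.2, h1.1.le, h1.2.le⟩

theorem deriv_of_int {v u : ℝ → ℝ} {l : ℝ} (hu : ContinuousOn u (Ici 0))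
    (h : ∀ t, 0 ≤ t → v t = l + ∫ s in (0:ℝ)..t, u s) {t : ℝ} (ht : 0 ≤ t) :
    HasDerivWithinAt v (u t) (Ici t) t := by
  have hc : Continuous (fun s => u (max s 0)) :=
    hu.comp_continuous (by fun_prop) (fun s => mem_Ici.2 (le_max_right s 0))
  have hd : HasDerivAt (fun t => l + ∫ s in (0:ℝ)..t, u (max s 0)) (u (max t 0)) t :=
    (hc.integral_hasStrictDerivAt 0 t).hasDerivAt.const_add l
  rw [max_eq_left ht] at hd
  have e : ∀ r, 0 ≤ r → v r = l + ∫ s in (0:ℝ)..r, u (max s 0) := by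
    intro r hr
    rw [h r hr]
    congr 1
    apply intervalIntegral.integral_congr
    intro s hs
    rw [uIcc_of_le hr] at hs
    simp only [max_eq_left hs.1]
  exact hd.hasDerivWithinAt.congr (fun r hr => e r (ht.trans hr)) (e t ht)

theorem cum_deriv {l : ℝ × ℝ} {v : ℝ → ℝ × ℝ} (h : SolvesCumulant B l v) {t : ℝ} (ht : 0 ≤ t) :
    HasDerivWithinAt (fun s => (v s).1) (-B.a11 * (v t).1 + m12 B * (v t).2 - R1 B (v t)) (Ici t) t ∧
    HasDerivWithinAt (fun s => (v s).2) (m21 B * (v t).1 + m22 B * (v t).2 - R2 B (v t)) (Ici t) t := by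
  obtain ⟨hc, hn, hi⟩ := h
  rw [← phi1_eq B (hn t ht).1 (hn t ht).2, ← phi2_eq B (hn t ht).1 (hn t ht).2]
  have mt : MapsTo v (Ici 0) quad := fun s hs => hn s hs
  exact ⟨deriv_of_int (u := fun s => mPhi1 B (v s))
      ((cont_quad fun M hM => cont1 B hM).comp hc mt) (fun s hs => (hi s hs).1) ht,
    deriv_of_int (u := fun s => mPhi2 B (v s))
      ((cont_quad fun M hM => cont2 B hM).comp hc mt) (fun s hs => (hi s hs).2) ht⟩

def KK : ℝ := |B.a11| + |m12 B| + |m21 B| + |m22 B| + 1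

theorem cum_bound {l : ℝ × ℝ} {v : ℝ → ℝ × ℝ} (h : SolvesCumulant B l v) {t : ℝ} (ht : 0 ≤ t) :
    (v t).1 + (v t).2 ≤ (l.1 + l.2) * Real.exp (KK B * t) := by
  have hc := h.1
  have hn := h.2.1
  have key := le_gronwallBound_of_liminf_deriv_right_le (f := fun s => (v s).1 + (v s).2)
    (f' := fun s => (-B.a11 * (v s).1 + m12 B * (v s).2 - R1 B (v s)) +
      (m21 B * (v s).1 + m22 B * (v s).2 - R2 B (v s))) (δ := l.1 + l.2) (K := KK B) (ε := 0)
    (a := 0) (b := t) ?_ ?_ ?_ ?_ t ⟨ht, le_rfl⟩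
  · rw [gronwallBound_ε0, sub_zero] at key
    exact key
  · have : ContinuousOn v (Icc 0 t) := hc.mono Icc_subset_Ici_self
    fun_prop
  · intro s hs r hr
    have hd := cum_deriv B h hs.1
    have := (hd.1.add hd.2).liminf_right_slope_le hr
    simpa [slope_def_field, div_eq_inv_mul] using this
  · have := h.2.2 0 le_rfl
    simp only [intervalIntegral.integral_same, add_zero] at this
    simp only [this.1, this.2, le_refl]
  · intro s hs
    obtain ⟨n1, n2⟩ := hn s hs.1
    have r1 := R1_nonneg B (v s)
    have r2 := R2_nonneg B (v s)
    unfold KK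
    have e1 := mul_le_mul_of_nonneg_right (neg_abs_le B.a11) n1
    have e2 := mul_le_mul_of_nonneg_right (le_abs_self (m12 B)) n2
    have e3 := mul_le_mul_of_nonneg_right (le_abs_self (m21 B)) n1
    have e4 := mul_le_mul_of_nonneg_right (le_abs_self (m22 B)) n2
    have f1 := mul_nonneg (abs_nonneg B.a11) n2
    have f2 := mul_nonneg (abs_nonneg (m12 B)) n1
    have f3 := mul_nonneg (abs_nonneg (m21 B)) n2
    have f4 := mul_nonneg (abs_nonneg (m22 B)) n1
    nlinarith

theorem mom_deriv {π : ℝ → ℝ × ℝ} (h : SolvesMoment B (1, 1) π) {t : ℝ} (ht : 0 ≤ t) :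
    HasDerivWithinAt (fun s => (π s).1) (-B.a11 * (π t).1 + m12 B * (π t).2) (Ici t) t ∧
    HasDerivWithinAt (fun s => (π s).2) (m21 B * (π t).1 + m22 B * (π t).2) (Ici t) t := by
  obtain ⟨h1, h2⟩ := h.2.2 t ht
  have e1 : -B.a11 * (π t).1 + (π t).2 * ∫ z, z.2 ∂B.n1 =
      -B.a11 * (π t).1 + m12 B * (π t).2 := by unfold m12; ring
  have e2 : B.a21 * (π t).1 + ∫ z, (z.1 * (π t).1 + z.2 * (π t).2) ∂B.n2 =
      m21 B * (π t).1 + m22 B * (π t).2 := by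
    rw [integral_add ((int2_1 B).mul_const _) ((int2_2 B).mul_const _), integral_mul_const,
      integral_mul_const]
    unfold m21 m22; ring
  rw [e1] at h1
  rw [e2] at h2
  exact ⟨h1.mono (Ici_subset_Ici.2 ht), h2.mono (Ici_subset_Ici.2 ht)⟩

theorem diff_bound {θ : ℝ} (hθ : 0 ≤ θ) {v : ℝ → ℝ × ℝ} (h : SolvesCumulant B (θ, θ) v)
    {π : ℝ → ℝ × ℝ} (hπ : SolvesMoment B (1, 1) π) {t : ℝ} (ht : 0 ≤ t)
    (hs : 2 * Real.exp (KK B * t) * θ ≤ 1) :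
    ‖v t - θ • π t‖ ≤ gronwallBound 0 (KK B) (rem B (2 * Real.exp (KK B * t) * θ)) t := by
  set c := 2 * Real.exp (KK B * t) * θ with hc
  have hc0 : 0 ≤ c := by positivity
  have hK : 0 ≤ KK B := by unfold KK; positivity
  have key := norm_le_gronwallBound_of_norm_deriv_right_le (f := fun s => v s - θ • π s)
    (f' := fun s => ((-B.a11 * (v s).1 + m12 B * (v s).2 - R1 B (v s)) -
        θ * (-B.a11 * (π s).1 + m12 B * (π s).2),
      (m21 B * (v s).1 + m22 B * (v s).2 - R2 B (v s)) -
        θ * (m21 B * (π s).1 + m22 B * (π s).2))) (δ := 0) (K := KK B) (ε := rem B c)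
    (a := 0) (b := t) ?_ ?_ ?_ ?_ t ⟨ht, le_rfl⟩
  · rw [sub_zero] at key
    exact key
  · have c1 : ContinuousOn v (Icc 0 t) := h.1.mono Icc_subset_Ici_self
    have c2 : ContinuousOn π (Icc 0 t) := by
      have a1 : ContinuousOn (fun s => (π s).1) (Icc 0 t) := fun s hs =>
        ((hπ.2.2 s hs.1).1.continuousWithinAt).mono Icc_subset_Ici_self
      have a2 : ContinuousOn (fun s => (π s).2) (Icc 0 t) := fun s hs =>
        ((hπ.2.2 s hs.1).2.continuousWithinAt).mono Icc_subset_Ici_self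
      exact a1.prodMk a2
    fun_prop
  · intro s hs
    have d1 := cum_deriv B h hs.1
    have d2 := mom_deriv B hπ hs.1
    exact (d1.1.sub (d2.1.const_mul θ)).prodMk (d1.2.sub (d2.2.const_mul θ))
  · have := h.2.2 0 le_rfl
    simp only [intervalIntegral.integral_same, add_zero] at this
    have e : v 0 = (θ, θ) := Prod.ext this.1 this.2
    rw [e, hπ.1]
    simp
  · intro s hs
    obtain ⟨n1, n2⟩ := h.2.1 s hs.1
    have hb := cum_bound B h hs.1
    have hbox : v s ∈ box c := by
      have : (θ + θ) * Real.exp (KK B * s) ≤ c := by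
        have : Real.exp (KK B * s) ≤ Real.exp (KK B * t) :=
          Real.exp_le_exp.2 (mul_le_mul_of_nonneg_left hs.2.le hK)
        rw [hc]; nlinarith
      simp only at hb
      exact ⟨n1, n2, by linarith, by linarith⟩
    have r1 := R1_nonneg B (v s)
    have r2 := R2_nonneg B (v s)
    have r1' := R1_le B hc0 hbox
    have r2' := R2_le B hc0 ‹_› hbox
    set D := v s - θ • π s with hD
    have D1 : |D.1| ≤ ‖D‖ := norm_fst_le D
    have D2 : |D.2| ≤ ‖D‖ := norm_snd_le D
    have q1 : D.1 = (v s).1 - θ * (π s).1 := by simp [hD]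
    have q2 : D.2 = (v s).2 - θ * (π s).2 := by simp [hD]
    have mb : ∀ p q : ℝ, |q| ≤ ‖D‖ → |p * q| ≤ |p| * ‖D‖ := by
      intro p q hq; rw [abs_mul]; gcongr
    have a1 := abs_le.1 (mb B.a11 _ D1)
    have a2 := abs_le.1 (mb (m12 B) _ D2)
    have a3 := abs_le.1 (mb (m21 B) _ D1)
    have a4 := abs_le.1 (mb (m22 B) _ D2)
    have p1 := mul_nonneg (abs_nonneg B.a11) (norm_nonneg D)
    have p2 := mul_nonneg (abs_nonneg (m12 B)) (norm_nonneg D)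
    have p3 := mul_nonneg (abs_nonneg (m21 B)) (norm_nonneg D)
    have p4 := mul_nonneg (abs_nonneg (m22 B)) (norm_nonneg D)
    have p5 := norm_nonneg D
    have ek : KK B * ‖D‖ = |B.a11| * ‖D‖ + |m12 B| * ‖D‖ + |m21 B| * ‖D‖ + |m22 B| * ‖D‖ + ‖D‖ := by
      unfold KK; ring
    rw [ek]
    have s1 : (-B.a11 * (v s).1 + m12 B * (v s).2 - R1 B (v s)) -
        θ * (-B.a11 * (π s).1 + m12 B * (π s).2) = -(B.a11 * D.1) + m12 B * D.2 - R1 B (v s) := by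
      rw [q1, q2]; ring
    have s2 : (m21 B * (v s).1 + m22 B * (v s).2 - R2 B (v s)) -
        θ * (m21 B * (π s).1 + m22 B * (π s).2) = m21 B * D.1 + m22 B * D.2 - R2 B (v s) := by
      rw [q1, q2]; ring
    rw [s1, s2]
    apply max_le
    · rw [Real.norm_eq_abs, abs_le]
      constructor <;> dsimp only <;> linarith [a1.1, a1.2, a2.1, a2.2]
    · rw [Real.norm_eq_abs, abs_le]
      constructor <;> dsimp only <;> linarith [a3.1, a3.2, a4.1, a4.2]

theorem V_lim {V : ℝ → (ℝ × ℝ) → ℝ × ℝ}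
    (hV : ∀ l : ℝ × ℝ, 0 ≤ l.1 → 0 ≤ l.2 → SolvesCumulant B l (fun t => V t l))
    {π : ℝ → ℝ × ℝ} (hπ : SolvesMoment B (1, 1) π) {t : ℝ} (ht : 0 ≤ t) :
    ∃ θ : ℕ → ℝ, (∀ k, 0 < θ k) ∧ Tendsto θ atTop (nhds 0) ∧
      Tendsto (fun k => (V t (θ k, θ k)).1 / θ k) atTop (nhds (π t).1) ∧
      Tendsto (fun k => (V t (θ k, θ k)).2 / θ k) atTop (nhds (π t).2) := by
  set C := 2 * Real.exp (KK B * t) with hC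
  have hC0 : 0 < C := by positivity
  have hK : KK B ≠ 0 := by unfold KK; positivity
  let c : ℕ → ℝ := fun k => 1 / ((k : ℝ) + 1)
  have c0 : ∀ k, 0 < c k := fun k => by positivity
  have c1 : ∀ k, c k ≤ 1 := fun k => by
    simp only [c]; rw [div_le_one (by positivity)]; linarith [Nat.cast_nonneg (α := ℝ) k]
  have cl : Tendsto c atTop (nhds 0) := tendsto_one_div_add_atTop_nhds_zero_nat
  let θ : ℕ → ℝ := fun k => c k / C
  have t0 : ∀ k, 0 < θ k := fun k => div_pos (c0 k) hC0
  have tl : Tendsto θ atTop (nhds 0) := by simpa using cl.div_const C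
  have hCθ : ∀ k, C * θ k = c k := fun k => by simp only [θ]; field_simp
  set G := (Real.exp (KK B * t) - 1) / KK B with hG
  have bd : ∀ k, ‖V t (θ k, θ k) - θ k • π t‖ / θ k ≤ (rem B (c k) / c k) * (C * G) := by
    intro k
    have h := diff_bound B (t0 k).le (hV (θ k, θ k) (t0 k).le (t0 k).le) hπ ht
      (by rw [← hC, hCθ]; exact c1 k)
    rw [← hC, hCθ, gronwallBound_of_K_ne_0 hK] at h
    rw [div_le_iff₀ (t0 k)]
    refine h.trans (le_of_eq ?_)
    have := (c0 k).ne'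
    simp only [θ, hG]
    field_simp
    ring
  have z : Tendsto (fun k => (rem B (c k) / c k) * (C * G)) atTop (nhds 0) := by
    simpa using (lim_rem B c0 c1 cl).mul_const (C * G)
  have gen : ∀ (f : ℕ → ℝ) (L : ℝ), (∀ k, |f k - θ k * L| ≤ ‖V t (θ k, θ k) - θ k • π t‖) →
      Tendsto (fun k => f k / θ k) atTop (nhds L) := by
    intro f L hf
    rw [tendsto_iff_dist_tendsto_zero]
    refine squeeze_zero (fun _ => dist_nonneg) (fun k => ?_) z
    refine le_trans ?_ (bd k)
    rw [Real.dist_eq]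
    have e : f k / θ k - L = (f k - θ k * L) / θ k := by
      have := (t0 k).ne'
      field_simp
    rw [e, abs_div, abs_of_pos (t0 k)]
    have := (t0 k).le
    gcongr
    exact hf k
  refine ⟨θ, t0, tl, gen _ _ fun k => ?_, gen _ _ fun k => ?_⟩
  · exact norm_fst_le (V t (θ k, θ k) - θ k • π t)
  · exact norm_snd_le (V t (θ k, θ k) - θ k • π t)

end MSB2

theorem lim_one_sub_exp {θ q : ℕ → ℝ} {L : ℝ} (h0 : ∀ k, 0 < θ k) (hl : Tendsto θ atTop (nhds 0))
    (q0 : ∀ k, 0 ≤ q k) (hq : Tendsto (fun k => q k / θ k) atTop (nhds L)) :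
    Tendsto (fun k => (1 - Real.exp (-(q k))) / θ k) atTop (nhds L) := by
  have z : Tendsto (fun k => (q k / θ k) ^ 2 * θ k) atTop (nhds 0) := by
    simpa using (hq.pow 2).mul hl
  have z2 : Tendsto (fun k => fE (q k) / θ k) atTop (nhds 0) := by
    refine squeeze_zero (fun k => div_nonneg (fE_nonneg _) (h0 k).le) (fun k => ?_) z
    rw [div_le_iff₀ (h0 k)]
    refine (fE_le_sq (by linarith [q0 k])).trans (le_of_eq ?_)
    have := (h0 k).ne'
    field_simp
  have := hq.sub z2
  rw [sub_zero] at this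
  refine this.congr fun k => ?_
  unfold fE; ring

theorem moment_eq (B : BranchingMechanism) {V : ℝ → (ℝ × ℝ) → ℝ × ℝ}
    (hV : ∀ l : ℝ × ℝ, 0 ≤ l.1 → 0 ≤ l.2 → SolvesCumulant B l (fun t => V t l))
    {P : ℝ → (ℝ × ℝ) → Measure (ℝ × ℝ)} (hP : IsMSBTransition V P)
    {π : ℝ → ℝ × ℝ} (hπ : SolvesMoment B (1, 1) π) {t : ℝ} (ht : 0 ≤ t)
    {x : ℝ × ℝ} (hx : x ∈ Mset) :
    Integrable (fun u : ℝ × ℝ => u.1 + u.2) (P t x) ∧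
      ∫ u, (u.1 + u.2) ∂(P t x) = x.1 * (π t).1 + x.2 * (π t).2 := by
  obtain ⟨θ, t0, tl, l1, l2⟩ := V_lim B hV hπ ht
  obtain ⟨pp, sp, lp⟩ := hP t ht x hx
  obtain ⟨x1, x2⟩ := mset_nonneg hx
  have ae := ae_mset sp
  let φ : ℕ → ℝ × ℝ → ℝ := fun k u => (1 - Real.exp (-(θ k * u.1 + θ k * u.2))) / θ k
  let q : ℕ → ℝ := fun k => x.1 * (V t (θ k, θ k)).1 + x.2 * (V t (θ k, θ k)).2
  have mφ : ∀ k, Measurable (φ k) := fun k => by fun_prop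
  have q0 : ∀ k, 0 ≤ q k := fun k => by
    have := (hV (θ k, θ k) (t0 k).le (t0 k).le).2.1 t ht
    exact add_nonneg (mul_nonneg x1 this.1) (mul_nonneg x2 this.2)
  have ql : Tendsto (fun k => q k / θ k) atTop (nhds (x.1 * (π t).1 + x.2 * (π t).2)) := by
    refine ((l1.const_mul x.1).add (l2.const_mul x.2)).congr fun k => ?_
    simp only [q]; ring
  have rl := lim_one_sub_exp t0 tl q0 ql
  have φb : ∀ k, ∀ᵐ u ∂(P t x), 0 ≤ φ k u ∧ φ k u ≤ u.1 + u.2 ∧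
      Real.exp (-(θ k * u.1 + θ k * u.2)) ≤ 1 := by
    intro k
    filter_upwards [ae] with u hu
    obtain ⟨u1, u2⟩ := mset_nonneg hu
    have hk := (t0 k)
    have e1 : Real.exp (-(θ k * u.1 + θ k * u.2)) ≤ 1 := by
      apply Real.exp_le_one_iff.2
      have : 0 ≤ θ k * u.1 + θ k * u.2 := by positivity
      linarith
    refine ⟨div_nonneg (by linarith) hk.le, ?_, e1⟩
    simp only [φ]
    rw [div_le_iff₀ hk]
    have := Real.add_one_le_exp (-(θ k * u.1 + θ k * u.2))
    linarith
  have iexp : ∀ k, Integrable (fun u : ℝ × ℝ => Real.exp (-(θ k * u.1 + θ k * u.2))) (P t x) := by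
    intro k
    refine (integrable_const (1:ℝ)).mono' (by apply Measurable.aestronglyMeasurable; fun_prop) ?_
    filter_upwards [φb k] with u hu
    rw [Real.norm_eq_abs, Real.abs_exp]
    exact hu.2.2
  have iφ : ∀ k, Integrable (φ k) (P t x) := fun k =>
    ((integrable_const (1:ℝ)).sub (iexp k)).div_const _
  have eφ : ∀ k, ∫ u, φ k u ∂(P t x) = (1 - Real.exp (-(q k))) / θ k := by
    intro k
    have := lp (θ k, θ k) (t0 k).le (t0 k).le
    simp only at this
    simp only [φ]
    rw [integral_div, integral_sub (integrable_const (1:ℝ)) (iexp k), this]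
    simp [q]
  have pl : ∀ᵐ u ∂(P t x), Tendsto (fun k => φ k u) atTop (nhds (u.1 + u.2)) := by
    filter_upwards [ae] with u hu
    obtain ⟨u1, u2⟩ := mset_nonneg hu
    refine lim_one_sub_exp (q := fun k => θ k * u.1 + θ k * u.2) t0 tl (fun k => ?_) ?_
    · have := (t0 k)
      positivity
    · refine tendsto_const_nhds.congr fun k => ?_
      have := (t0 k).ne'
      field_simp
  have mint : Integrable (fun u : ℝ × ℝ => u.1 + u.2) (P t x) := by
    refine ⟨by apply Measurable.aestronglyMeasurable; fun_prop, ?_⟩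
    rw [hasFiniteIntegral_iff_ofReal]
    · have fatou : ∫⁻ u, ENNReal.ofReal (u.1 + u.2) ∂(P t x) ≤
          liminf (fun k => ∫⁻ u, ENNReal.ofReal (φ k u) ∂(P t x)) atTop := by
        refine le_trans (le_of_eq ?_) (lintegral_liminf_le (fun k => (mφ k).ennreal_ofReal))
        apply lintegral_congr_ae
        filter_upwards [pl] with u hu
        exact ((ENNReal.continuous_ofReal.tendsto _).comp hu).liminf_eq.symm
      have e : Tendsto (fun k => ∫⁻ u, ENNReal.ofReal (φ k u) ∂(P t x)) atTop
          (nhds (ENNReal.ofReal (x.1 * (π t).1 + x.2 * (π t).2))) := by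
        refine ((ENNReal.continuous_ofReal.tendsto _).comp rl).congr fun k => ?_
        rw [← ofReal_integral_eq_lintegral_ofReal (iφ k) ((φb k).mono fun u hu => hu.1), eφ k]
        rfl
      rw [e.liminf_eq] at fatou
      exact fatou.trans_lt ENNReal.ofReal_lt_top
    · filter_upwards [ae] with u hu
      obtain ⟨u1, u2⟩ := mset_nonneg hu
      exact add_nonneg u1 u2
  refine ⟨mint, ?_⟩
  have dct : Tendsto (fun k => ∫ u, φ k u ∂(P t x)) atTop (nhds (∫ u, (u.1 + u.2) ∂(P t x))) := by
    apply tendsto_integral_of_dominated_convergence (fun u => u.1 + u.2)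
      (fun k => (mφ k).aestronglyMeasurable) mint _ pl
    intro k
    filter_upwards [φb k] with u hu
    rw [Real.norm_eq_abs, abs_of_nonneg hu.1]
    exact hu.2.1
  simp_rw [eφ] at dct
  exact tendsto_nhds_unique dct rl

/-- Coupling bounds for the `L¹`-Wasserstein distance between
`P_t(x,·)` and `P_t(y,·)`: every coupling has cost at least
`|(x₁-y₁)π₁(t,1) + (x₂-y₂)π₂(t,1)|`, and some coupling has cost at most
`|x₁-y₁|π₁(t,1) + |x₂-y₂|π₂(t,1)`. -/
theorem wasserstein_bounds_MSB (B : BranchingMechanism)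
    (V : ℝ → (ℝ × ℝ) → ℝ × ℝ)
    (hV : ∀ l : ℝ × ℝ, 0 ≤ l.1 → 0 ≤ l.2 → SolvesCumulant B l (fun t => V t l))
    (P : ℝ → (ℝ × ℝ) → Measure (ℝ × ℝ))
    (hP : IsMSBTransition V P)
    (π : ℝ → ℝ × ℝ) (hπ : SolvesMoment B (1, 1) π) :
    ∀ t : ℝ, 0 ≤ t → ∀ x ∈ Mset, ∀ y ∈ Mset,
      -- (i) lower bound for every coupling
      (∀ Pc : Measure ((ℝ × ℝ) × (ℝ × ℝ)), IsCoupling Pc (P t x) (P t y) →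
        ENNReal.ofReal |(x.1 - y.1) * (π t).1 + (x.2 - y.2) * (π t).2|
          ≤ ∫⁻ w, ENNReal.ofReal (|w.1.1 - w.2.1| + |w.1.2 - w.2.2|) ∂Pc) ∧
      -- (ii) upper bound for some coupling
      (∃ Pc : Measure ((ℝ × ℝ) × (ℝ × ℝ)), IsCoupling Pc (P t x) (P t y) ∧
        ∫⁻ w, ENNReal.ofReal (|w.1.1 - w.2.1| + |w.1.2 - w.2.2|) ∂Pc
          ≤ ENNReal.ofReal (|x.1 - y.1| * (π t).1 + |x.2 - y.2| * (π t).2)) := by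
  intro t ht x hx y hy
  exact wass_of_moment hP ht (π t) (hπ.2.1 t ht)
    (fun x hx => moment_eq B hV hP hπ ht hx) hx hy
end
end
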